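/- There exist universal constants C ≥ 1, Ĉ ≥ 1 and ĉ > 0 such that: for all margin levels 0 ≤ γ < γ' ≤ 1, every hypothesis class H ⊆ [−1,1]^X, and every tuple X' ∈ X^m with m ≥ Ĉ·fat_{ĉ(γ'−γ)}(H)/(γ'−γ)², one has ln |N_∞(X', Conv(H)_{⌈2γ'⌉}, (γ'−γ)/2)| ≤ (C·Ĉ·fat_{ĉ(γ'−γ)}(H)/(γ'−γ)²)·ln^{3/2}( ((γ'−γ)²·m/(Ĉ·fat_{ĉ(γ'−γ)}(H)))·(8γ'/(γ'−γ)) ). -/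

import Mathlib

open MeasureTheory Real
open scoped ENNReal NNReal

noncomputable section

namespace Agb

/-- signed value of a boolean label: `true ↦ 1`, `false ↦ -1`. -/
def bval (b : Bool) : ℝ := if b then 1 else -1

variable {X : Type*}

/-- a hypothesis is binary (±1-valued) -/
def IsBinary (h : X → ℝ) : Prop := ∀ x, h x = 1 ∨ h x = -1

/-- correlation of a hypothesis under a distribution on `X × Bool` -/
def corr [MeasurableSpace X] (D : Measure (X × Bool)) (h : X → ℝ) : ℝ :=
  ∫ p, bval p.2 * h p.1 ∂D

/-- error of a classifier under a distribution on `X × Bool` -/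
def err [MeasurableSpace X] (D : Measure (X × Bool)) (h : X → ℝ) : ℝ :=
  (D {p | h p.1 ≠ bval p.2}).toReal

/-- `lam`-margin loss of `g` under a distribution on `X × Bool` -/
def mloss [MeasurableSpace X] (D : Measure (X × Bool)) (lam : ℝ) (g : X → ℝ) : ℝ :=
  (D {p | bval p.2 * g p.1 ≤ lam}).toReal

/-- the `m`-fold product (i.i.d. sample) measure -/
def iid {α : Type*} [MeasurableSpace α] (D : Measure α) (m : ℕ) :
    Measure (Fin m → α) :=
  Measure.pi fun _ => D

/-- truncated logarithm -/
def Ln (x : ℝ) : ℝ := Real.log (max x (Real.exp 1))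

/-- `H` shatters the points `x` -/
def Shatters (H : Set (X → ℝ)) {d : ℕ} (x : Fin d → X) : Prop :=
  ∀ b : Fin d → Bool, ∃ h ∈ H, ∀ i, h (x i) = bval (b i)

/-- the VC dimension of `H` is at most `d` -/
def VCLe (H : Set (X → ℝ)) (d : ℕ) : Prop :=
  ∀ x : Fin (d + 1) → X, Function.Injective x → ¬ Shatters H x

/-- `H` α-fat-shatters the points `x` with levels `r` -/
def FatShatters (H : Set (X → ℝ)) (α : ℝ) {d : ℕ} (x : Fin d → X) (r : Fin d → ℝ) : Prop :=
  ∀ b : Fin d → Bool, ∃ h ∈ H, ∀ i,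
    (b i = true → r i + α ≤ h (x i)) ∧ (b i = false → h (x i) ≤ r i - α)

/-- `d` is the fat-shattering dimension of `H` at level `α` -/
def IsFatDim (H : Set (X → ℝ)) (α : ℝ) (d : ℕ) : Prop :=
  IsGreatest {k : ℕ | ∃ (x : Fin k → X) (r : Fin k → ℝ), FatShatters H α x r} d

/-- `(γ, ε₀, δ₀, m₀, F, H)` agnostic weak learner -/
def IsAWL [MeasurableSpace X] (γ ε₀ δ₀ : ℝ) (m₀ : ℕ) (F H : Set (X → ℝ))
    (W : List (X × Bool) → X → ℝ) : Prop :=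
  (∀ S, W S ∈ H) ∧
  ∀ D : Measure (X × Bool), IsProbabilityMeasure D →
    ENNReal.ofReal (1 - δ₀) ≤
      iid D m₀ {S | γ * (⨆ f ∈ F, corr D f) - ε₀ ≤ corr D (W (List.ofFn S))}

/-- sign function, with `sign 0 = 1` -/
def rsign (x : ℝ) : ℝ := if 0 ≤ x then 1 else -1

/-- empirical `lam`-margin loss on a finite sample -/
def empLoss {m : ℕ} (S : Fin m → X × Bool) (lam : ℝ) (g : X → ℝ) : ℝ :=
  (∑ i, if bval (S i).2 * g (S i).1 ≤ lam then (1 : ℝ) else 0) / m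

/-- truncation of `v` at level `γ` -/
def truncAt (γ : ℝ) (v : X → ℝ) : X → ℝ := fun x => max (-γ) (min γ (v x))

/-- `N` is an `ε`-cover of `G` in sup norm over the points `x` -/
def IsCover {k : ℕ} (x : Fin k → X) (G : Set (X → ℝ)) (ε : ℝ) (N : Set (X → ℝ)) : Prop :=
  ∀ g ∈ G, ∃ g' ∈ N, ∀ i, |g (x i) - g' (x i)| ≤ ε

/-- minimal size of a finite `ε`-cover of `G` over the points `x` (∞ if none exists) -/
def covNum {k : ℕ} (x : Fin k → X) (G : Set (X → ℝ)) (ε : ℝ) : ℝ≥0∞ :=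
  ⨅ (N : Finset (X → ℝ)) (_ : IsCover x G ε ↑N), (N.card : ℝ≥0∞)

end Agb

open Agb

/-! Over random signs the convex hull gains nothing over `H`: a set of `n` points `α`-shattered by
the hull forces the Rademacher average of `H` on them to be at least `α n`. Chaining bounds this
average by `O(√(d n))`, where `d` is the fat-shattering dimension of `H` at a scale of order `α`,
because the `L²` entropy of `H` at precision `δ` is `O(d / δ)` with no factor `log n`. Hence the
hull has dimension `O(d / α²)`, and truncation does not increase it.

The entropy bound comes from counting shattered patterns. A class of functions with values in a
grid, any two of them far apart on a constant proportion of the coordinates, splits at some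
coordinate and some level into two balanced parts, so that by induction it shatters polynomially
many patterns in its size. The dimension limits the number of patterns on few coordinates, and
restricting the class to a random sample of coordinates removes the dependence on their number.

For covers in sup norm on `m` points, the same counting is applied to a maximal family that is
separated on at least `D` coordinates: a proportion `D / m` of separating coordinates costs a
further factor `√log` in the exponent. Every function is then close to a member of the family
except at fewer than `D` points, where one patches it; together this gives the power `3 / 2`. -/

namespace Agb

open Finset
open scoped BigOperators

section Patterns

variable {ι : Type*} {b : ℕ} {F G : Finset (ι → ℤ)} {s : ι → Option (Fin b)} {i : ι} {ℓ : Fin b}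

/-- The threshold patterns shattered by a class `F` of integer-valued functions. A pattern
prescribes a level `ℓ < b` on some of the coordinates; it is shattered if on those coordinates the
members of `F` realize every combination of the events `f i ≤ ℓ` and `ℓ + 2 ≤ f i`. -/
def shatteredPatterns (b : ℕ) (F : Finset (ι → ℤ)) : Set (ι → Option (Fin b)) :=
  {s | ∀ β : ι → Bool, ∃ f ∈ F, ∀ i ℓ, s i = some ℓ → if β i then (ℓ : ℤ) + 2 ≤ f i else f i ≤ ℓ}

lemma shatteredPatterns_mono (h : F ⊆ G) : shatteredPatterns b F ⊆ shatteredPatterns b G :=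
  fun _ hs β ↦ (hs β).imp fun _ hf ↦ ⟨h hf.1, hf.2⟩

lemma exists_le_of_mem_shatteredPatterns (hs : s ∈ shatteredPatterns b F) (hi : s i = some ℓ) :
    ∃ f ∈ F, f i ≤ ℓ :=
  (hs fun _ ↦ false).imp fun _ hf ↦ ⟨hf.1, by simpa using hf.2 i ℓ hi⟩

lemma exists_ge_of_mem_shatteredPatterns (hs : s ∈ shatteredPatterns b F) (hi : s i = some ℓ) :
    ∃ f ∈ F, (ℓ : ℤ) + 2 ≤ f i :=
  (hs fun _ ↦ true).imp fun _ hf ↦ ⟨hf.1, by simpa using hf.2 i ℓ hi⟩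

lemma const_none_mem_shatteredPatterns (hF : F.Nonempty) :
    (fun _ ↦ none) ∈ shatteredPatterns b F :=
  fun _ ↦ hF.imp fun _ hf ↦ ⟨hf, by simp⟩

lemma update_mem_shatteredPatterns [DecidableEq ι]
    (hlo : s ∈ shatteredPatterns b {f ∈ F | f i ≤ ℓ})
    (hhi : s ∈ shatteredPatterns b {f ∈ F | (ℓ : ℤ) + 2 ≤ f i}) :
    Function.update s i (some ℓ) ∈ shatteredPatterns b F := by
  intro β
  have key : ∃ f ∈ F, (if β i then (ℓ : ℤ) + 2 ≤ f i else f i ≤ ℓ) ∧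
      ∀ j k, s j = some k → if β j then (k : ℤ) + 2 ≤ f j else f j ≤ k := by
    cases hβ : β i with
    | false =>
      obtain ⟨f, hf, hfs⟩ := hlo β
      exact ⟨f, (mem_filter.1 hf).1, by simpa using (mem_filter.1 hf).2, hfs⟩
    | true =>
      obtain ⟨f, hf, hfs⟩ := hhi β
      exact ⟨f, (mem_filter.1 hf).1, by simpa using (mem_filter.1 hf).2, hfs⟩
  obtain ⟨f, hf, hfi, hfs⟩ := key
  refine ⟨f, hf, fun j k hjk ↦ ?_⟩
  obtain rfl | hj := eq_or_ne j i
  · obtain rfl : ℓ = k := by simpa using hjk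
    exact hfi
  · exact hfs j k (by rwa [Function.update_of_ne hj] at hjk)

/-- A pattern shattered by both halves is free at `i`, so it can be extended there by `ℓ`. -/
lemma ncard_shatteredPatterns_add_le [Finite ι] (i : ι) (ℓ : Fin b) :
    (shatteredPatterns b {f ∈ F | f i ≤ ℓ}).ncard +
      (shatteredPatterns b {f ∈ F | (ℓ : ℤ) + 2 ≤ f i}).ncard ≤ (shatteredPatterns b F).ncard := by
  classical
  set A := shatteredPatterns b {f ∈ F | f i ≤ ℓ}
  set B := shatteredPatterns b {f ∈ F | (ℓ : ℤ) + 2 ≤ f i}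
  let extend (s : ι → Option (Fin b)) := Function.update s i (some ℓ)
  have hnone : ∀ s ∈ A ∩ B, s i = none := by
    rintro s ⟨hA, hB⟩
    by_contra hs
    obtain ⟨k, hk⟩ := Option.ne_none_iff_exists'.1 hs
    obtain ⟨f, hf, hkf⟩ := exists_ge_of_mem_shatteredPatterns hA hk
    obtain ⟨g, hg, hgk⟩ := exists_le_of_mem_shatteredPatterns hB hk
    have hfℓ := (mem_filter.1 hf).2
    have hgℓ := (mem_filter.1 hg).2
    omega
  have hinj : Set.InjOn extend (A ∩ B) := fun s hs t ht hst ↦ by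
    have := congrArg (Function.update · i none) hst
    simp only [extend, Function.update_idem] at this
    rwa [← hnone s hs, Function.update_eq_self, hnone s hs, ← hnone t ht,
      Function.update_eq_self] at this
  have hdisj : Disjoint (A ∪ B) (extend '' (A ∩ B)) := by
    rw [Set.disjoint_right]
    rintro _ ⟨s, -, rfl⟩ (hA | hB)
    · obtain ⟨f, hf, hℓf⟩ := exists_ge_of_mem_shatteredPatterns (i := i) (ℓ := ℓ) hA
        (Function.update_self ..)
      have := (mem_filter.1 hf).2
      omega
    · obtain ⟨f, hf, hfℓ⟩ := exists_le_of_mem_shatteredPatterns (i := i) (ℓ := ℓ) hB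
        (Function.update_self ..)
      have := (mem_filter.1 hf).2
      omega
  have hsub : A ∪ B ∪ extend '' (A ∩ B) ⊆ shatteredPatterns b F :=
    Set.union_subset (Set.union_subset (shatteredPatterns_mono (filter_subset ..))
      (shatteredPatterns_mono (filter_subset ..)))
      (Set.image_subset_iff.2 fun s hs ↦ update_mem_shatteredPatterns hs.1 hs.2)
  calc A.ncard + B.ncard = (A ∪ B).ncard + (extend '' (A ∩ B)).ncard := by
        rw [hinj.ncard_image, Set.ncard_union_add_ncard_inter]
    _ = (A ∪ B ∪ extend '' (A ∩ B)).ncard := (Set.ncard_union_eq hdisj).symm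
    _ ≤ (shatteredPatterns b F).ncard := Set.ncard_le_ncard hsub

end Patterns

section BalancedLevel

variable {α : Type*} {F : Finset α} {u : α → ℤ} {p : ℝ} {K : ℕ}

lemma pow_le_or_pow_le_of_one_le_mul_two_pow {a b c : ℝ} (ha : 0 ≤ a) (ha' : a ≤ 1 / 2)
    (hb : 0 ≤ b) (hc : 1 ≤ c * 2 ^ (K ^ 2)) : a ^ K ≤ b ∨ b ^ K ≤ c := by
  refine or_iff_not_imp_left.2 fun hab ↦ ?_
  have hbK : b ^ K ≤ (1 / 2) ^ (K ^ 2) := by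
    calc b ^ K ≤ ((1 / 2) ^ K) ^ K := by
          gcongr
          exact (not_le.1 hab).le.trans (by gcongr)
      _ = (1 / 2) ^ (K ^ 2) := by rw [← pow_mul, sq]
  refine hbK.trans ?_
  rwa [one_div, inv_pow, inv_le_iff_one_le_mul₀ (by positivity)]

lemma exists_two_mul_card_lt_le {β : Type*} [LinearOrder β] (hF : F.Nonempty) (u : α → β) :
    ∃ M, 2 * #{f ∈ F | M < u f} ≤ #F ∧ 2 * #{f ∈ F | u f < M} ≤ #F := by
  set S := {f ∈ F | #F ≤ 2 * #{g ∈ F | u g ≤ u f}}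
  have hSne : S.Nonempty := by
    obtain ⟨f, hf, hmax⟩ := F.exists_max_image u hF
    refine ⟨f, mem_filter.2 ⟨hf, ?_⟩⟩
    rw [filter_true_of_mem hmax]
    omega
  obtain ⟨f, hfS, hmin⟩ := S.exists_min_image u hSne
  refine ⟨u f, ?_, ?_⟩
  · have := card_filter_add_card_filter_not (s := F) (u · ≤ u f)
    simp only [not_le] at this
    have := (mem_filter.1 hfS).2
    omega
  · obtain hempty | hne := {g ∈ F | u g < u f}.eq_empty_or_nonempty
    · simp [hempty]
    obtain ⟨g, hg, hmax⟩ := exists_max_image _ u hne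
    obtain ⟨hgF, hgf⟩ := mem_filter.1 hg
    have hsub : {h ∈ F | u h < u f} ⊆ {h ∈ F | u h ≤ u g} := fun h hh ↦
      mem_filter.2 ⟨(mem_filter.1 hh).1, hmax h hh⟩
    have hgS : ¬ #F ≤ 2 * #{h ∈ F | u h ≤ u g} := fun hge ↦
      (hmin g (mem_filter.2 ⟨hgF, hge⟩)).not_gt hgf
    have := card_le_card hsub
    omega

/-- Going up from the median, the three tails at distance `1`, `2`, `3` cannot each be smaller than
the `K`-th power of the preceding one. -/
lemma exists_level_of_heavy_upper_tail {c : ℝ} {M : ℤ} (hF : F.Nonempty)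
    (hM : 2 * #{f ∈ F | M < u f} ≤ #F) (hc : 1 ≤ c * 2 ^ (K ^ 2))
    (htail : c * #F ≤ #{f ∈ F | M + 3 ≤ u f}) :
    ∃ ℓ : ℤ, ∃ β : ℝ, 0 < β ∧ β ≤ 1 / 2 ∧
      (1 - β) * #F ≤ #{f ∈ F | u f ≤ ℓ} ∧ β ^ K * #F ≤ #{f ∈ F | ℓ + 2 ≤ u f} := by
  have hF0 : (0 : ℝ) < #F := by exact_mod_cast hF.card_pos
  have hc0 : 0 < c := pos_of_mul_pos_left (one_pos.trans_le hc) (by positivity)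
  let tail (z : ℤ) : ℝ := #{f ∈ F | z ≤ u f}
  have tail_anti : Antitone tail := fun z w hzw ↦ by
    dsimp only [tail]
    gcongr
  have card_le_eq (z : ℤ) : (#{f ∈ F | u f ≤ z} : ℝ) = (1 - tail (z + 1) / #F) * #F := by
    have hcard : (#{f ∈ F | u f ≤ z} + #{f ∈ F | z + 1 ≤ u f} : ℝ) = #F := by
      have := card_filter_add_card_filter_not (s := F) (u · ≤ z)
      simp only [not_le, ← Int.add_one_le_iff] at this
      exact_mod_cast this
    rw [sub_mul, div_mul_cancel₀ _ hF0.ne', one_mul, ← hcard, add_sub_cancel_right]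
  have htail1 : tail (M + 1) / #F ≤ 1 / 2 := by
    rw [div_le_div_iff₀ hF0 two_pos, mul_comm, one_mul]
    dsimp only [tail]
    exact_mod_cast hM
  have htail21 : tail (M + 2) / #F ≤ tail (M + 1) / #F := by
    gcongr
    exact tail_anti (by omega)
  have htail2 : 0 < tail (M + 2) :=
    ((by positivity : 0 < c * #F).trans_le htail).trans_le (tail_anti (by omega))
  have htail1' : 0 < tail (M + 1) := htail2.trans_le (tail_anti (by omega))
  rw [← le_div_iff₀ hF0] at htail
  obtain hstep | hstep := pow_le_or_pow_le_of_one_le_mul_two_pow (K := K)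
    (by positivity) htail1 (div_nonneg htail2.le hF0.le)
    (hc.trans (mul_le_mul_of_nonneg_right htail (by positivity)))
  · exact ⟨M, tail (M + 1) / #F, by positivity, htail1, (card_le_eq M).ge,
      (le_div_iff₀ hF0).1 hstep⟩
  · refine ⟨M + 1, tail (M + 2) / #F, by positivity, htail21.trans htail1, ?_, ?_⟩
    · rw [card_le_eq, add_assoc, one_add_one_eq_two]
    · rw [add_assoc]
      exact (le_div_iff₀ hF0).1 hstep

lemma mul_card_le_card_tails (hF : F.Nontrivial) (hp : 0 ≤ p)
    (hu : p * #F.offDiag ≤ #{q ∈ F.offDiag | 6 ≤ |u q.1 - u q.2|}) (M : ℤ) :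
    p / 4 * #F ≤ #{f ∈ F | M + 3 ≤ u f} + #{f ∈ F | u f ≤ M - 3} := by
  classical
  set E := {f ∈ F | M + 3 ≤ u f} ∪ {f ∈ F | u f ≤ M - 3} with hE
  have hpairs : {q ∈ F.offDiag | 6 ≤ |u q.1 - u q.2|} ⊆ E ×ˢ F ∪ F ×ˢ E := by
    intro q hq
    obtain ⟨hqF, hgap⟩ := mem_filter.1 hq
    obtain ⟨h1, h2, -⟩ := mem_offDiag.1 hqF
    rw [le_abs] at hgap
    simp only [hE, mem_union, mem_product, mem_filter, h1, h2, true_and, and_true]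
    omega
  have hpairs_card : p * #F.offDiag ≤ 2 * #F * #E := by
    have hcard := (card_le_card hpairs).trans (card_union_le ..)
    rw [card_product, card_product, mul_comm #E, ← two_mul, ← mul_assoc] at hcard
    exact hu.trans (mod_cast hcard)
  have hoff : (#F : ℝ) * #F ≤ 2 * #F.offDiag := by
    have htwo := one_lt_card_iff_nontrivial.2 hF
    have hsq := Nat.mul_le_mul_right #F htwo
    rw [offDiag_card]
    exact_mod_cast (by omega : #F * #F ≤ 2 * (#F * #F - #F))
  have hF0 : (0 : ℝ) < #F := by exact_mod_cast hF.nonempty.card_pos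
  have hE_card : p / 4 * #F ≤ #E := by
    refine le_of_mul_le_mul_left ?_ (by positivity : 0 < 2 * (#F : ℝ))
    nlinarith [mul_le_mul_of_nonneg_left hoff hp]
  exact hE_card.trans (mod_cast card_union_le ..)

/-- Around a median, the half that carries the larger tail has a level with the required balance. -/
lemma exists_balanced_level (hF : F.Nontrivial) (hK : 8 ≤ p * 2 ^ (K ^ 2))
    (hu : p * #F.offDiag ≤ #{q ∈ F.offDiag | 6 ≤ |u q.1 - u q.2|}) :
    ∃ ℓ : ℤ, ∃ β : ℝ, 0 < β ∧ β ≤ 1 / 2 ∧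
      ((1 - β) * #F ≤ #{f ∈ F | u f ≤ ℓ} ∧ β ^ K * #F ≤ #{f ∈ F | ℓ + 2 ≤ u f} ∨
        (1 - β) * #F ≤ #{f ∈ F | ℓ + 2 ≤ u f} ∧ β ^ K * #F ≤ #{f ∈ F | u f ≤ ℓ}) := by
  have hp : 0 < p := pos_of_mul_pos_left (by linarith) (by positivity : (0 : ℝ) ≤ 2 ^ (K ^ 2))
  obtain ⟨M, hup, hdown⟩ := exists_two_mul_card_lt_le hF.nonempty u
  have htails := mul_card_le_card_tails hF hp.le hu M
  obtain hheavy | hheavy : p / 8 * #F ≤ #{f ∈ F | M + 3 ≤ u f} ∨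
      p / 8 * #F ≤ #{f ∈ F | u f ≤ M - 3} := by
    by_contra! hlight
    linarith [hlight.1, hlight.2]
  · obtain ⟨ℓ, β, h0, h1, hℓ⟩ := exists_level_of_heavy_upper_tail (K := K) hF.nonempty hup
      (by linarith) hheavy
    exact ⟨ℓ, β, h0, h1, .inl hℓ⟩
  · have hneg (z : ℤ) : {f ∈ F | u f ≤ z} = {f ∈ F | -z ≤ -u f} := by simp only [neg_le_neg_iff]
    obtain ⟨ℓ, β, h0, h1, hℓ⟩ := exists_level_of_heavy_upper_tail (u := fun f ↦ -u f) (M := -M)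
      (K := K) (c := p / 8) hF.nonempty (by simpa only [neg_lt_neg_iff] using hdown) (by linarith)
      (by rwa [hneg, neg_sub, sub_eq_neg_add] at hheavy)
    refine ⟨-(ℓ + 2), β, h0, h1, .inr ?_⟩
    rw [hneg, neg_neg]
    simpa only [neg_add_cancel_right, neg_add, neg_le] using hℓ

end BalancedLevel

lemma exists_mul_card_le_card_filter {α κ : Type*} [Fintype κ] [Nonempty κ] {P : Finset α}
    {R : α → κ → Prop} [∀ q i, Decidable (R q i)] {p : ℝ}
    (hP : ∀ q ∈ P, p * Fintype.card κ ≤ #{i | R q i}) : ∃ i, p * #P ≤ #{q ∈ P | R q i} := by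
  have hcount : ∑ _i : κ, p * #P ≤ ∑ i, (#{q ∈ P | R q i} : ℝ) :=
    calc ∑ _i : κ, p * #P = ∑ _q ∈ P, p * Fintype.card κ := by
          simp only [sum_const, card_univ, nsmul_eq_mul]
          ring
      _ ≤ ∑ q ∈ P, (#{i | R q i} : ℝ) := sum_le_sum hP
      _ = ∑ i, (#{q ∈ P | R q i} : ℝ) := mod_cast
          sum_card_bipartiteAbove_eq_sum_card_bipartiteBelow R
  obtain ⟨i, -, hi⟩ := exists_le_of_sum_le univ_nonempty hcount
  exact ⟨i, hi⟩

lemma le_add_pow_of_one_sub_mul_le {N S T β : ℝ} {K : ℕ} (hN : 0 ≤ N) (hS : 0 ≤ S) (hT : 0 ≤ T)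
    (hβ : 0 ≤ β) (hβ' : β ≤ 1) (h₁ : (1 - β) * N ≤ S ^ K) (h₂ : β ^ K * N ≤ T ^ K) :
    N ≤ (S + T) ^ K := by
  obtain rfl | hK := eq_or_ne K 0
  · simpa using h₂
  obtain ⟨y, hy, rfl⟩ : ∃ y : ℝ, 0 ≤ y ∧ y ^ K = N :=
    ⟨N ^ (K : ℝ)⁻¹, by positivity, Real.rpow_inv_natCast_pow hN hK⟩
  have hyS : (1 - β) * y ≤ S := by
    refine le_of_pow_le_pow_left₀ hK hS (le_trans ?_ h₁)
    rw [mul_pow]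
    gcongr
    exact pow_le_of_le_one (by linarith) (by linarith) hK
  have hyT : β * y ≤ T := le_of_pow_le_pow_left₀ hK hT (by rwa [mul_pow])
  gcongr
  linarith

section SeparatedClasses

variable {ι : Type*} [Fintype ι] {b K : ℕ} {p : ℝ}

lemma exists_balanced_split {F : Finset (ι → ℤ)} (hF : F.Nontrivial) (hK : 8 ≤ p * 2 ^ (K ^ 2))
    (hb : ∀ f ∈ F, ∀ i, 0 ≤ f i ∧ f i ≤ b)
    (hsep : ∀ q ∈ F.offDiag, p * Fintype.card ι ≤ #{i | 6 ≤ |q.1 i - q.2 i|}) :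
    ∃ (i : ι) (ℓ : Fin b) (β : ℝ), 0 ≤ β ∧ β ≤ 1 ∧
      (∃ f ∈ F, f i ≤ (ℓ : ℤ)) ∧ (∃ f ∈ F, (ℓ : ℤ) + 2 ≤ f i) ∧
      ((1 - β) * #F ≤ #{f ∈ F | f i ≤ (ℓ : ℤ)} ∧ β ^ K * #F ≤ #{f ∈ F | (ℓ : ℤ) + 2 ≤ f i} ∨
        (1 - β) * #F ≤ #{f ∈ F | (ℓ : ℤ) + 2 ≤ f i} ∧ β ^ K * #F ≤ #{f ∈ F | f i ≤ (ℓ : ℤ)}) := by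
  have : Nonempty ι := by
    by_contra hempty
    rw [not_nonempty_iff] at hempty
    exact (one_lt_card_iff_nontrivial.2 hF).not_ge (card_le_one_of_subsingleton F)
  obtain ⟨i, hi⟩ := exists_mul_card_le_card_filter (P := F.offDiag)
    (R := fun q i ↦ 6 ≤ |q.1 i - q.2 i|) fun q hq ↦ hsep q hq
  obtain ⟨ℓ, β, hβ0, hβ1, hβ⟩ := exists_balanced_level (u := fun f : ι → ℤ ↦ f i) hF hK hi
  have hN : (0 : ℝ) < #F := by exact_mod_cast hF.nonempty.card_pos
  have hlarge : 0 < (1 - β) * #F := mul_pos (by linarith) hN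
  have hsmall : 0 < β ^ K * #F := by positivity
  have hlo : {f ∈ F | f i ≤ ℓ}.Nonempty := card_pos.1 <| Nat.cast_pos (α := ℝ).1 <|
    hβ.elim (fun h ↦ hlarge.trans_le h.1) fun h ↦ hsmall.trans_le h.2
  have hhi : {f ∈ F | ℓ + 2 ≤ f i}.Nonempty := card_pos.1 <| Nat.cast_pos (α := ℝ).1 <|
    hβ.elim (fun h ↦ hsmall.trans_le h.2) fun h ↦ hlarge.trans_le h.1
  rw [filter_nonempty_iff] at hlo hhi
  obtain ⟨k, rfl⟩ : ∃ k : Fin b, (k : ℤ) = ℓ := by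
    obtain ⟨f, hf, hfℓ⟩ := hlo
    obtain ⟨g, hg, hℓg⟩ := hhi
    have := (hb f hf i).1
    have := (hb g hg i).2
    exact ⟨⟨ℓ.toNat, by omega⟩, Int.toNat_of_nonneg (by omega)⟩
  exact ⟨i, k, β, hβ0.le, by linarith, hlo, hhi, hβ⟩

/-- Split the class at a balanced level: the shattered patterns of the two parts add up, and the
bounds for the two parts combine by `le_add_pow_of_one_sub_mul_le`. -/
lemma card_le_ncard_shatteredPatterns_pow {F : Finset (ι → ℤ)} (hK : 8 ≤ p * 2 ^ (K ^ 2))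
    (hb : ∀ f ∈ F, ∀ i, 0 ≤ f i ∧ f i ≤ b)
    (hsep : ∀ q ∈ F.offDiag, p * Fintype.card ι ≤ #{i | 6 ≤ |q.1 i - q.2 i|}) :
    (#F : ℝ) ≤ ((shatteredPatterns b F).ncard : ℝ) ^ K := by
  classical
  induction F using Finset.strongInduction with | _ F ih
  obtain rfl | hne := F.eq_empty_or_nonempty
  · simp
  obtain ⟨f₀, rfl⟩ | hnt := hne.exists_eq_singleton_or_nontrivial
  · have hpos := (Set.ncard_pos (Set.toFinite _)).2
      ⟨_, const_none_mem_shatteredPatterns (b := b) hne⟩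
    rw [card_singleton, Nat.cast_one]
    exact one_le_pow₀ (mod_cast hpos)
  obtain ⟨i, ℓ, β, hβ0, hβ1, ⟨f, hf, hfℓ⟩, ⟨g, hg, hℓg⟩, hβ⟩ := exists_balanced_split hnt hK hb hsep
  have ih' {r : (ι → ℤ) → Prop} [DecidablePred r] (hr : ∃ f ∈ F, ¬ r f) :
      (#{f ∈ F | r f} : ℝ) ≤ (shatteredPatterns b {f ∈ F | r f}).ncard ^ K :=
    ih _ (filter_ssubset.2 hr) (fun f hf ↦ hb f (mem_filter.1 hf).1) fun q hq ↦
      hsep q (offDiag_mono (filter_subset ..) hq)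
  have ihlo := ih' (r := fun f ↦ f i ≤ (ℓ : ℤ)) ⟨g, hg, by omega⟩
  have ihhi := ih' (r := fun f ↦ (ℓ : ℤ) + 2 ≤ f i) ⟨f, hf, by omega⟩
  have hsplit : ((shatteredPatterns b {f ∈ F | f i ≤ (ℓ : ℤ)}).ncard +
      (shatteredPatterns b {f ∈ F | (ℓ : ℤ) + 2 ≤ f i}).ncard : ℝ) ≤
      (shatteredPatterns b F).ncard := mod_cast ncard_shatteredPatterns_add_le i ℓ
  refine le_trans ?_ (pow_le_pow_left₀ (by positivity) hsplit K)
  obtain ⟨h₁, h₂⟩ | ⟨h₁, h₂⟩ := hβ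
  · exact le_add_pow_of_one_sub_mul_le (by positivity) (by positivity) (by positivity) hβ0 hβ1
      (h₁.trans ihlo) (h₂.trans ihhi)
  · rw [add_comm]
    exact le_add_pow_of_one_sub_mul_le (by positivity) (by positivity) (by positivity) hβ0 hβ1
      (h₁.trans ihhi) (h₂.trans ihlo)

end SeparatedClasses

section CountingPatterns

variable {ι α : Type*} [Fintype ι] [Fintype α]

lemma sum_pow_card_isSome [DecidableEq ι] (x : ℝ) :
    ∑ s : ι → Option α, x ^ #{i | (s i).isSome} = (1 + Fintype.card α * x) ^ Fintype.card ι := by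
  calc ∑ s : ι → Option α, x ^ #{i | (s i).isSome}
      = ∑ s : ι → Option α, ∏ i, if (s i).isSome then x else 1 := by
        simp only [prod_ite, prod_const, one_pow, mul_one]
    _ = ∏ _i : ι, ∑ o : Option α, if o.isSome then x else 1 :=
        (Fintype.prod_sum fun (_ : ι) (o : Option α) ↦ if o.isSome then x else 1).symm
    _ = (1 + Fintype.card α * x) ^ Fintype.card ι := by
        simp [Fintype.sum_option]

/-- Weighting a pattern with support `k` by `(D / (n b)) ^ k` makes the total weight at most
`exp D`. -/
lemma ncard_le_rpow_of_card_isSome_le {D : ℝ} (hD : 0 < D)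
    (hDn : D ≤ Fintype.card ι * Fintype.card α) {S : Set (ι → Option α)}
    (hS : ∀ s ∈ S, (#{i | (s i).isSome} : ℝ) ≤ D) :
    (S.ncard : ℝ) ≤ (exp 1 * (Fintype.card ι * Fintype.card α) / D) ^ D := by
  classical
  set n := (Fintype.card ι : ℝ)
  set b := (Fintype.card α : ℝ)
  have hnb : 0 < n * b := hD.trans_le hDn
  set x := D / (n * b) with hx
  have hx0 : 0 < x := by positivity
  have hx1 : x ≤ 1 := (div_le_one hnb).2 hDn
  have hweight : (S.ncard : ℝ) * x ^ D ≤ exp D := by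
    rw [Set.ncard_eq_toFinset_card']
    calc (#S.toFinset : ℝ) * x ^ D = ∑ _s ∈ S.toFinset, x ^ D := by rw [sum_const, nsmul_eq_mul]
      _ ≤ ∑ s ∈ S.toFinset, x ^ #{i | (s i).isSome} := by
          refine sum_le_sum fun s hs ↦ ?_
          rw [← Real.rpow_natCast]
          exact Real.rpow_le_rpow_of_exponent_ge hx0 hx1 (hS s (Set.mem_toFinset.1 hs))
      _ ≤ ∑ s : ι → Option α, x ^ #{i | (s i).isSome} :=
          sum_le_sum_of_subset_of_nonneg (subset_univ _) fun _ _ _ ↦ by positivity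
      _ = (b * x + 1) ^ Fintype.card ι := by rw [sum_pow_card_isSome, add_comm]
      _ ≤ exp (b * x) ^ Fintype.card ι := by
          gcongr
          exact add_one_le_exp _
      _ = exp D := by
          rw [← exp_nat_mul, hx, ← mul_assoc, mul_div_cancel₀ _ hnb.ne']
  rwa [mul_div_assoc, show n * b / D = x⁻¹ by rw [hx, inv_div], ← div_eq_mul_inv,
    Real.div_rpow (exp_pos 1).le hx0.le, exp_one_rpow, le_div_iff₀ (by positivity)]

end CountingPatterns

section FatDimLE

variable {X : Type*} {H : Set (X → ℝ)} {α D : ℝ}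

/-- The fat-shattering dimension of `H` at scale `α` is at most the real number `D`. -/
def FatDimLE (H : Set (X → ℝ)) (α D : ℝ) : Prop :=
  ∀ (k : ℕ) (x : Fin k → X) (r : Fin k → ℝ), FatShatters H α x r → (k : ℝ) ≤ D

lemma IsFatDim.fatDimLE {d : ℕ} (h : IsFatDim H α d) : FatDimLE H α d :=
  fun _ x r hxr ↦ mod_cast h.2 ⟨x, r, hxr⟩

lemma FatDimLE.card_le {κ : Type*} [Fintype κ] (h : FatDimLE H α D) {x : κ → X} {r : κ → ℝ}
    (hxr : ∀ β : κ → Bool, ∃ f ∈ H, ∀ i, if β i then r i + α ≤ f (x i) else f (x i) ≤ r i - α) :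
    (Fintype.card κ : ℝ) ≤ D := by
  let e := Fintype.equivFin κ
  refine h _ (x ∘ e.symm) (r ∘ e.symm) fun β ↦ (hxr (β ∘ e)).imp fun f hf ↦ ⟨hf.1, fun j ↦ ?_⟩
  have hj := hf.2 (e.symm j)
  cases hβ : β j <;> simpa [hβ] using hj

lemma FatDimLE.comp {Y : Type*} {φ : Y → X} (h : FatDimLE H α D) :
    FatDimLE ((· ∘ φ) '' H) α D := by
  intro k y r hyr
  refine h k (φ ∘ y) r fun β ↦ ?_
  obtain ⟨_, ⟨f, hf, rfl⟩, hfr⟩ := hyr β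
  exact ⟨f, hf, hfr⟩

lemma FatDimLE.mono {G : Set (X → ℝ)} (h : FatDimLE H α D) (hGH : G ⊆ H) : FatDimLE G α D :=
  fun k x r hxr ↦ h k x r fun β ↦ (hxr β).imp fun _ hf ↦ ⟨hGH hf.1, hf.2⟩

lemma FatDimLE.anti {α' : ℝ} (h : FatDimLE H α D) (hα : α ≤ α') : FatDimLE H α' D :=
  fun k x r hxr ↦ h k x r fun β ↦ (hxr β).imp fun _ hf ↦ ⟨hf.1, fun i ↦
    ⟨fun hi ↦ by linarith [(hf.2 i).1 hi], fun hi ↦ by linarith [(hf.2 i).2 hi]⟩⟩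

end FatDimLE

section OffDiag

variable {β γ : Type*} {F : Finset β} {T : β → γ} {R : γ → γ → Prop}

lemma forall_mem_offDiag_image [DecidableEq γ] (h : ∀ q ∈ F.offDiag, R (T q.1) (T q.2)) :
    ∀ q ∈ (F.image T).offDiag, R q.1 q.2 := by
  rintro ⟨_, _⟩ hq
  simp only [mem_offDiag, mem_image] at hq
  obtain ⟨⟨f, hf, rfl⟩, ⟨g, hg, rfl⟩, hne⟩ := hq
  exact h (f, g) (mem_offDiag.2 ⟨hf, hg, fun hfg ↦ hne (congrArg T hfg)⟩)

lemma injOn_of_forall_mem_offDiag (hR : ∀ y, ¬ R y y)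
    (h : ∀ q ∈ F.offDiag, R (T q.1) (T q.2)) : Set.InjOn T (F : Set β) := by
  intro f hf g hg hfg
  by_contra hne
  exact hR (T g) (hfg ▸ h (f, g) (mem_offDiag.2 ⟨hf, hg, hne⟩))

end OffDiag

section Quantize

variable {ι : Type*} {c θ : ℝ} {b : ℕ} {f g : ι → ℝ} {i : ι}

/-- Rounding a function with values in `[-c, c]` down to the grid `-c + θ ℤ`. -/
def quantize (c θ : ℝ) (f : ι → ℝ) (i : ι) : ℤ := ⌊(f i + c) / θ⌋

lemma quantize_nonneg (hθ : 0 < θ) (hf : |f i| ≤ c) : 0 ≤ quantize c θ f i :=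
  Int.floor_nonneg.2 (div_nonneg (by linarith [abs_le.1 hf]) hθ.le)

lemma quantize_le (hθ : 0 < θ) (hb : 2 * c / θ < b + 1) (hf : |f i| ≤ c) :
    quantize c θ f i ≤ b := by
  refine Int.lt_add_one_iff.1 (Int.floor_lt.2 (lt_of_le_of_lt ?_ (mod_cast hb)))
  gcongr
  linarith [abs_le.1 hf]

lemma six_le_abs_quantize_sub (hθ : 0 < θ) (hfg : 7 * θ ≤ |f i - g i|) :
    6 ≤ |quantize c θ f i - quantize c θ g i| := by
  wlog hle : g i ≤ f i generalizing f g
  · rw [abs_sub_comm] at hfg ⊢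
    exact this hfg (le_of_not_ge hle)
  rw [abs_of_nonneg (sub_nonneg.2 hle)] at hfg
  have hgap : (g i + c) / θ + 7 ≤ (f i + c) / θ := by
    rw [div_add' _ _ _ hθ.ne']
    exact div_le_div_of_nonneg_right (by linarith) hθ.le
  have hfloor : quantize c θ g i + 7 ≤ quantize c θ f i := by
    simpa only [quantize, Int.floor_add_ofNat] using Int.floor_le_floor hgap
  exact (by omega : 6 ≤ quantize c θ f i - quantize c θ g i).trans (le_abs_self _)

lemma card_isSome_le_of_mem_shatteredPatterns [Fintype ι] [DecidableEq (ι → ℤ)]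
    {F : Finset (ι → ℝ)} {D : ℝ} (hθ : 0 < θ) (hD : FatDimLE (F : Set (ι → ℝ)) (θ / 2) D)
    {s : ι → Option (Fin b)} (hs : s ∈ shatteredPatterns b (F.image (quantize c θ))) :
    (#{i | (s i).isSome} : ℝ) ≤ D := by
  classical
  rw [← Fintype.card_subtype]
  choose lev hlev using fun i : {i // (s i).isSome} ↦ Option.isSome_iff_exists.1 i.2
  refine hD.card_le (x := Subtype.val) (r := fun i ↦ ((lev i : ℕ) + 3 / 2) * θ - c) fun β ↦ ?_
  obtain ⟨_, hF, hs'⟩ := hs fun i ↦ if h : (s i).isSome then β ⟨i, h⟩ else true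
  obtain ⟨f, hf, rfl⟩ := mem_image.1 hF
  refine ⟨f, hf, fun i ↦ ?_⟩
  have hi := hs' i (lev i) (hlev i)
  simp only [i.2, dite_true] at hi
  split_ifs at hi ⊢ with hβ
  · have hle := Int.le_floor.1 hi
    rw [le_div_iff₀ hθ] at hle
    push_cast at hle
    linarith
  · have hlt := Int.floor_le_iff.1 hi
    rw [div_lt_iff₀ hθ] at hlt
    push_cast at hlt
    linarith

/-- Quantization turns a gap of `7θ` into an integer gap of at least `6`, and a pattern shattered by
the quantized class is fat-shattered at scale `θ / 2` by the original one. -/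
lemma card_le_of_separated [Fintype ι] {F : Finset (ι → ℝ)} {p D : ℝ} {K : ℕ}
    (hK : 8 ≤ p * 2 ^ (K ^ 2)) (hθ : 0 < θ) (hb : 2 * c / θ < b + 1)
    (hF : ∀ f ∈ F, ∀ i, |f i| ≤ c)
    (hsep : ∀ q ∈ F.offDiag, p * Fintype.card ι ≤ #{i | 7 * θ ≤ |q.1 i - q.2 i|})
    (hD : 0 < D) (hDn : D ≤ Fintype.card ι * b)
    (hfat : FatDimLE (F : Set (ι → ℝ)) (θ / 2) D) :
    (#F : ℝ) ≤ ((exp 1 * (Fintype.card ι * b) / D) ^ D) ^ K := by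
  classical
  have hp : 0 < p := pos_of_mul_pos_left (by linarith) (by positivity : (0 : ℝ) ≤ 2 ^ (K ^ 2))
  have hn : (0 : ℝ) < Fintype.card ι := pos_of_mul_pos_left (hD.trans_le hDn) (by positivity)
  let R (u v : ι → ℤ) : Prop := p * Fintype.card ι ≤ #{i | 6 ≤ |u i - v i|}
  have hsep' : ∀ q ∈ F.offDiag, R (quantize c θ q.1) (quantize c θ q.2) := fun q hq ↦
    (hsep q hq).trans <| mod_cast card_le_card <|
      monotone_filter_right univ fun i _ ↦ six_le_abs_quantize_sub hθ
  have hR : ∀ u, ¬ R u u := fun u ↦ by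
    simpa [R] using mul_pos hp hn
  have hinj := injOn_of_forall_mem_offDiag hR hsep'
  have hcard := card_le_ncard_shatteredPatterns_pow (F := F.image (quantize c θ)) (b := b) hK
    (forall_mem_image.2 fun f hf i ↦ ⟨quantize_nonneg hθ (hF f hf i),
      quantize_le hθ hb (hF f hf i)⟩) (forall_mem_offDiag_image hsep')
  rw [card_image_of_injOn hinj] at hcard
  refine hcard.trans ?_
  gcongr
  simpa only [Fintype.card_fin] using ncard_le_rpow_of_card_isSome_le hD
    (by rwa [Fintype.card_fin]) fun s hs ↦
    card_isSome_le_of_mem_shatteredPatterns hθ hfat hs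

end Quantize

section Sampling

variable {ι : Type*} [Fintype ι] [DecidableEq ι] {p : ℝ}

lemma exp_neg_one_le_half : exp (-1) ≤ 1 / 2 := by
  rw [exp_neg, inv_le_comm₀ (exp_pos 1) (by norm_num)]
  linarith [exp_one_gt_d9]

/-- The moment generating function of the number of hits of `A`, the hits being independent with
probability at least `p`. -/
lemma sum_exp_neg_card_mem_le {A : Finset ι} (hA : p * Fintype.card ι ≤ #A) (s : ℕ) :
    ∑ φ : Fin s → ι, exp (-#{j | φ j ∈ A}) ≤ (Fintype.card ι * exp (-(p / 2))) ^ s := by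
  have hfactor : ∀ φ : Fin s → ι,
      exp (-#{j | φ j ∈ A}) = ∏ j, if φ j ∈ A then exp (-1) else 1 := fun φ ↦ by
    rw [← prod_filter, prod_const, ← exp_nat_mul, mul_neg_one]
  have hsingle : ∑ i : ι, (if i ∈ A then exp (-1) else 1) ≤ Fintype.card ι * exp (-(p / 2)) := by
    calc ∑ i : ι, (if i ∈ A then exp (-1) else 1)
        = ∑ i : ι, (1 - (1 - exp (-1)) * if i ∈ A then 1 else 0) :=
          sum_congr rfl fun i _ ↦ by split_ifs <;> ring
      _ = Fintype.card ι - (1 - exp (-1)) * #A := by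
          simp only [sum_sub_distrib, ← mul_sum, sum_boole, sum_const, card_univ, nsmul_one,
            filter_univ_mem]
      _ ≤ Fintype.card ι - 1 / 2 * #A := by
          gcongr
          linarith [exp_neg_one_le_half]
      _ ≤ Fintype.card ι - 1 / 2 * (p * Fintype.card ι) := by gcongr
      _ = Fintype.card ι * (-(p / 2) + 1) := by ring
      _ ≤ Fintype.card ι * exp (-(p / 2)) := by
          gcongr
          exact add_one_le_exp _
  simp only [hfactor]
  rw [← Fintype.sum_pow fun i : ι ↦ if i ∈ A then exp (-1) else 1]
  gcongr

lemma exists_forall_mul_le_card_mem [Nonempty ι] {s : ℕ} {𝒜 : Finset (Finset ι)}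
    (hA : ∀ A ∈ 𝒜, p * Fintype.card ι ≤ #A) (hcard : (#𝒜 : ℝ) < exp (p / 4 * s)) :
    ∃ φ : Fin s → ι, ∀ A ∈ 𝒜, p / 4 * s ≤ #{j | φ j ∈ A} := by
  by_contra! hmiss
  have hpow : (0 : ℝ) < (Fintype.card ι : ℝ) ^ s := by positivity
  have hlt : #𝒜 * exp (-(p / 4 * s)) < 1 := by
    rwa [exp_neg, ← div_eq_mul_inv, div_lt_one (exp_pos _)]
  refine (mul_lt_of_lt_one_left hpow hlt).not_ge ?_
  calc (Fintype.card ι : ℝ) ^ s = ∑ _φ : Fin s → ι, 1 := by simp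
    _ ≤ ∑ φ : Fin s → ι, ∑ A ∈ 𝒜, exp (p / 4 * s - #{j | φ j ∈ A}) := by
        refine sum_le_sum fun φ _ ↦ ?_
        obtain ⟨A, hA𝒜, hlt⟩ := hmiss φ
        exact (one_le_exp (by linarith)).trans <|
          single_le_sum (f := fun A : Finset ι ↦ exp (p / 4 * s - #{j | φ j ∈ A}))
            (fun _ _ ↦ (exp_pos _).le) hA𝒜
    _ = ∑ A ∈ 𝒜, exp (p / 4 * s) * ∑ φ : Fin s → ι, exp (-#{j | φ j ∈ A}) := by
        rw [sum_comm]
        simp only [sub_eq_add_neg, exp_add, mul_sum]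
    _ ≤ ∑ _A ∈ 𝒜, exp (p / 4 * s) * (Fintype.card ι * exp (-(p / 2))) ^ s := by
        gcongr with A hA𝒜
        exact sum_exp_neg_card_mem_le (hA A hA𝒜) s
    _ = #𝒜 * exp (-(p / 4 * s)) * (Fintype.card ι : ℝ) ^ s := by
        rw [sum_const, nsmul_eq_mul, mul_pow, ← exp_nat_mul,
          show -(p / 4 * s) = p / 4 * s + s * -(p / 2) by ring, exp_add]
        ring

end Sampling

section L2Entropy

variable {ι : Type*} [Fintype ι] {F : Finset (ι → ℝ)}

lemma exists_sample_forall_le_card [Nonempty ι] {p t : ℝ} {s : ℕ}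
    (hs : (#F : ℝ) ^ 2 < exp (p / 4 * s))
    (hsep : ∀ q ∈ F.offDiag, p * Fintype.card ι ≤ #{i | t ≤ |q.1 i - q.2 i|}) :
    ∃ φ : Fin s → ι, ∀ q ∈ F.offDiag,
      p / 4 * s ≤ #{j | t ≤ |q.1 (φ j) - q.2 (φ j)|} := by
  classical
  let apart (q : (ι → ℝ) × (ι → ℝ)) : Finset ι := {i | t ≤ |q.1 i - q.2 i|}
  have hoff : #F.offDiag ≤ #F ^ 2 := by
    rw [offDiag_card, sq]
    exact Nat.sub_le _ _
  have hcard : (#(F.offDiag.image apart) : ℝ) < exp (p / 4 * s) :=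
    lt_of_le_of_lt (mod_cast card_image_le.trans hoff) hs
  obtain ⟨φ, hφ⟩ := exists_forall_mul_le_card_mem (forall_mem_image.2 hsep) hcard
  refine ⟨φ, fun q hq ↦ ?_⟩
  simpa only [apart, mem_filter_univ] using hφ _ (mem_image_of_mem apart hq)

/-- Restricting to a random sample of coordinates replaces their number by a sample size
logarithmic in `#F`. -/
lemma card_le_of_separated_of_sq_card_lt [Nonempty ι] {c θ p D : ℝ} {s b K : ℕ}
    (hs : (#F : ℝ) ^ 2 < exp (p / 4 * s)) (hK : 8 ≤ p / 4 * 2 ^ (K ^ 2)) (hθ : 0 < θ)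
    (hb : 2 * c / θ < b + 1) (hF : ∀ f ∈ F, ∀ i, |f i| ≤ c)
    (hsep : ∀ q ∈ F.offDiag, p * Fintype.card ι ≤ #{i | 7 * θ ≤ |q.1 i - q.2 i|})
    (hD : 0 < D) (hDs : D ≤ s * b) (hfat : FatDimLE (F : Set (ι → ℝ)) (θ / 2) D) :
    (#F : ℝ) ≤ ((exp 1 * (s * b) / D) ^ D) ^ K := by
  classical
  have hp : 0 < p / 4 :=
    pos_of_mul_pos_left (by linarith) (by positivity : (0 : ℝ) ≤ 2 ^ (K ^ 2))
  have hs0 : (0 : ℝ) < s := pos_of_mul_pos_left (hD.trans_le hDs) (by positivity)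
  obtain ⟨φ, hφ⟩ := exists_sample_forall_le_card hs hsep
  let R (u v : Fin s → ℝ) : Prop :=
    p / 4 * Fintype.card (Fin s) ≤ #{j | 7 * θ ≤ |u j - v j|}
  have hφsep : ∀ q ∈ F.offDiag, R (q.1 ∘ φ) (q.2 ∘ φ) := by
    simpa only [R, Fintype.card_fin, Function.comp_apply] using hφ
  have hR : ∀ u, ¬ R u u := fun u ↦ by
    simpa [R, (by positivity : 0 < 7 * θ).not_ge] using mul_pos hp hs0
  have himage := forall_mem_offDiag_image (R := R) (T := fun f : ι → ℝ ↦ f ∘ φ) hφsep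
  have hinj := injOn_of_forall_mem_offDiag (R := R) (T := fun f : ι → ℝ ↦ f ∘ φ) hR hφsep
  have hmain := card_le_of_separated (F := F.image fun f : ι → ℝ ↦ f ∘ φ) (D := D) hK hθ hb
    (forall_mem_image.2 fun f hf j ↦ hF f hf _) (fun q hq ↦ himage q hq) hD
    (by rwa [Fintype.card_fin]) (by simpa only [coe_image] using hfat.comp)
  rwa [card_image_of_injOn hinj, Fintype.card_fin] at hmain

lemma mul_card_le_card_half_le_abs {v : ι → ℝ} {δ : ℝ} (hv : ∀ i, |v i| ≤ 2)
    (hδ : δ ^ 2 * Fintype.card ι ≤ ∑ i, v i ^ 2) :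
    δ ^ 2 / 8 * Fintype.card ι ≤ #{i | δ / 2 ≤ |v i|} := by
  have hsum : ∑ i, v i ^ 2 ≤ δ ^ 2 / 4 * Fintype.card ι + 4 * #{i | δ / 2 ≤ |v i|} := by
    calc ∑ i, v i ^ 2 ≤ ∑ i, (δ ^ 2 / 4 + 4 * if δ / 2 ≤ |v i| then 1 else 0) := by
          refine sum_le_sum fun i _ ↦ ?_
          rw [← sq_abs]
          split_ifs with hi
          · nlinarith [hv i, abs_nonneg (v i)]
          · nlinarith [abs_nonneg (v i)]
      _ = _ := by
          rw [sum_add_distrib, ← mul_sum, sum_boole, sum_const, card_univ, nsmul_eq_mul, mul_comm]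
  nlinarith [mul_nonneg (sq_nonneg δ) (Nat.cast_nonneg (α := ℝ) (Fintype.card ι))]

lemma pow_four_le_two_pow_sq {K : ℕ} (hK : 4 ≤ K) : K ^ 4 ≤ 2 ^ (K ^ 2) :=
  calc K ^ 4 ≤ (2 ^ K) ^ 4 := by
        gcongr
        exact Nat.lt_two_pow_self.le
    _ = 2 ^ (K * 4) := (pow_mul _ _ _).symm
    _ ≤ 2 ^ (K ^ 2) := by
        rw [sq]
        gcongr
        exact one_le_two

lemma log_fifty_thousand_le : log 50000 ≤ 11 := by
  calc log 50000 ≤ log (exp 1 ^ 11) := by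
        refine log_le_log (by norm_num) ?_
        calc (50000 : ℝ) ≤ 2.7 ^ 11 := by norm_num
          _ ≤ exp 1 ^ 11 := by
            gcongr
            linarith [exp_one_gt_d9]
    _ = 11 := by rw [log_pow, log_exp, mul_one, Nat.cast_ofNat]

lemma le_mul_sq_of_le_mul_log {w y : ℝ} (hw : 1 ≤ w) (hy : 0 < y)
    (h : y ≤ 5 * w * log (5000 * w ^ 6 * y)) : y ≤ 100 * w ^ 2 := by
  have hw0 : 0 < w := by linarith
  have hlog : log (5000 * w ^ 6 * y) ≤ 3 + 7 * w + y / (10 * w) := by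
    rw [show 5000 * w ^ 6 * y = 50000 * w ^ 7 * (y / (10 * w)) by field_simp; norm_num,
      log_mul (by positivity) (by positivity), log_mul (by norm_num) (by positivity), log_pow]
    push_cast
    linarith [log_fifty_thousand_le, log_le_sub_one_of_pos hw0,
      log_le_sub_one_of_pos (show 0 < y / (10 * w) by positivity)]
  have hhalf : y ≤ 15 * w + 35 * w ^ 2 + y / 2 :=
    calc y ≤ 5 * w * (3 + 7 * w + y / (10 * w)) := h.trans (by gcongr)
      _ = 15 * w + 35 * w ^ 2 + y / 2 := by
          field_simp
          ring
  nlinarith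

lemma exists_nat_le_mul_and_le_two_pow_sq {w : ℝ} (hw : 1 ≤ w) :
    ∃ K : ℕ, (K : ℝ) ≤ 5 * w ∧ 256 * w ^ 4 ≤ 2 ^ (K ^ 2) := by
  have hceil := Nat.le_ceil (4 * w)
  refine ⟨⌈4 * w⌉₊, by linarith [Nat.ceil_lt_add_one (by linarith : 0 ≤ 4 * w)], ?_⟩
  have hfour : 4 ≤ ⌈4 * w⌉₊ := by exact_mod_cast (by linarith : (4 : ℝ) ≤ 4 * w).trans hceil
  calc 256 * w ^ 4 = (4 * w) ^ 4 := by ring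
    _ ≤ (⌈4 * w⌉₊ : ℝ) ^ 4 := by gcongr
    _ ≤ 2 ^ (⌈4 * w⌉₊ ^ 2) := mod_cast pow_four_le_two_pow_sq hfour

lemma card_le_of_l2_separated [Nonempty ι] {δ D : ℝ} {s b K : ℕ} (hδ : 0 < δ)
    (hs : (#F : ℝ) ^ 2 < exp (δ ^ 2 / 32 * s)) (hK : 256 ≤ δ ^ 2 * 2 ^ (K ^ 2))
    (hb : 28 / δ < b + 1) (hF : ∀ f ∈ F, ∀ i, |f i| ≤ 1)
    (hsep : ∀ q ∈ F.offDiag, δ ^ 2 * Fintype.card ι ≤ ∑ i, (q.1 i - q.2 i) ^ 2)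
    (hD : 0 < D) (hDs : D ≤ s * b) (hfat : FatDimLE (F : Set (ι → ℝ)) (δ / 28) D) :
    (#F : ℝ) ≤ ((exp 1 * (s * b) / D) ^ D) ^ K := by
  refine card_le_of_separated_of_sq_card_lt (c := 1) (θ := δ / 14) (p := δ ^ 2 / 8)
    (by rwa [show δ ^ 2 / 8 / 4 = δ ^ 2 / 32 by ring]) (by linarith) (by positivity)
    (by rwa [show 2 * 1 / (δ / 14) = 28 / δ by field_simp; norm_num]) hF (fun q hq ↦ ?_) hD hDs
    (by rwa [show δ / 14 / 2 = δ / 28 by ring])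
  obtain ⟨h₁, h₂, -⟩ := mem_offDiag.1 hq
  rw [show 7 * (δ / 14) = δ / 2 by ring]
  exact mul_card_le_card_half_le_abs (v := fun i ↦ q.1 i - q.2 i)
    (fun i ↦ (abs_sub _ _).trans (by linarith [hF _ h₁ i, hF _ h₂ i])) (hsep q hq)

/-- The sample has size of order `w ^ 4 log #F`, so the bound has `#F` only inside a logarithm. -/
lemma log_card_le_mul_log_of_l2_separated [Nonempty ι] {w d : ℝ} (hw : 1 ≤ w) (hd : 1 ≤ d)
    (hF : ∀ f ∈ F, ∀ i, |f i| ≤ 1)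
    (hsep : ∀ q ∈ F.offDiag, (w ^ 2)⁻¹ ^ 2 * Fintype.card ι ≤ ∑ i, (q.1 i - q.2 i) ^ 2)
    (hfat : FatDimLE (F : Set (ι → ℝ)) ((w ^ 2)⁻¹ / 28) d) (hdF : d ≤ log #F) :
    log #F ≤ 5 * w * (d * log (5000 * w ^ 6 * (log #F / d))) := by
  have hF1 : (1 : ℝ) < #F := (log_pos_iff (Nat.cast_nonneg _)).1 (by linarith)
  set M := log #F with hM
  have hw2 : 1 ≤ w ^ 2 := one_le_pow₀ hw
  have hw4 : 1 ≤ w ^ 4 := one_le_pow₀ hw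
  obtain ⟨s, hs, hs'⟩ : ∃ s : ℕ, 64 * M * w ^ 4 < s ∧ s ≤ 65 * M * w ^ 4 := by
    refine ⟨⌊64 * M * w ^ 4⌋₊ + 1, mod_cast Nat.lt_floor_add_one _, ?_⟩
    push_cast
    nlinarith [Nat.floor_le (by positivity : 0 ≤ 64 * M * w ^ 4)]
  obtain ⟨b, hb, hb'⟩ : ∃ b : ℕ, 28 * w ^ 2 < b + 1 ∧ b ≤ 28 * w ^ 2 :=
    ⟨⌊28 * w ^ 2⌋₊, Nat.lt_floor_add_one _, Nat.floor_le (by positivity)⟩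
  obtain ⟨K, hK, hK'⟩ := exists_nat_le_mul_and_le_two_pow_sq hw
  have hds : d ≤ s * b :=
    (by nlinarith : d ≤ s).trans <| le_mul_of_one_le_right (Nat.cast_nonneg s) (by linarith)
  have hcard : (#F : ℝ) ≤ ((exp 1 * (s * b) / d) ^ d) ^ K := by
    refine card_le_of_l2_separated (by positivity) ?_ ?_ ?_ hF hsep (by linarith) hds hfat
    · rw [← exp_log (by linarith : (0 : ℝ) < #F), ← hM, ← exp_nat_mul, exp_lt_exp, inv_pow,
        ← pow_mul, inv_div_left, inv_mul_eq_div, lt_div_iff₀ (by positivity), Nat.cast_ofNat]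
      exact lt_of_eq_of_lt (by ring) hs
    · rwa [inv_pow, ← pow_mul, inv_mul_eq_div, le_div_iff₀ (by positivity)]
    · rwa [div_inv_eq_mul]
  have hbase : 1 ≤ exp 1 * (s * b) / d := by
    rw [one_le_div (by linarith)]
    nlinarith [add_one_le_exp 1]
  calc M ≤ K * (d * log (exp 1 * (s * b) / d)) := by
        rw [← log_rpow (by linarith), ← log_pow]
        exact log_le_log (by linarith) hcard
    _ ≤ 5 * w * (d * log (5000 * w ^ 6 * (M / d))) := by
        have := log_nonneg hbase
        gcongr
        calc exp 1 * (s * b) / d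
            ≤ 2.72 * (65 * M * w ^ 4 * (28 * w ^ 2)) / d := by
              gcongr
              linarith [exp_one_lt_d9]
          _ = 4950.4 * w ^ 6 * (M / d) := by ring
          _ ≤ 5000 * w ^ 6 * (M / d) := by
              gcongr
              norm_num

lemma card_le_exp_of_l2_separated {δ d : ℝ} (hδ : 0 < δ) (hδ1 : δ ≤ 1) (hd : 1 ≤ d)
    (hF : ∀ f ∈ F, ∀ i, |f i| ≤ 1)
    (hsep : ∀ q ∈ F.offDiag, δ ^ 2 * Fintype.card ι ≤ ∑ i, (q.1 i - q.2 i) ^ 2)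
    (hfat : FatDimLE (F : Set (ι → ℝ)) (δ / 28) d) : (#F : ℝ) ≤ exp (100 * d / δ) := by
  by_contra! hlt
  have hι : Nonempty ι := by
    obtain ⟨f, -, g, -, hfg⟩ :=
      one_lt_card.1 (mod_cast (one_le_exp (by positivity)).trans_lt hlt : 1 < #F)
    exact (Function.ne_iff.1 hfg).nonempty
  obtain ⟨w, hw, rfl⟩ : ∃ w, 1 ≤ w ∧ δ = (w ^ 2)⁻¹ :=
    ⟨√δ⁻¹, one_le_sqrt.2 ((one_le_inv₀ hδ).2 hδ1), by rw [sq_sqrt (by positivity), inv_inv]⟩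
  rw [div_inv_eq_mul, ← lt_log_iff_exp_lt ((exp_pos _).trans hlt)] at hlt
  have hdM : d < log #F := by nlinarith [one_le_pow₀ hw (n := 2)]
  have hmain := log_card_le_mul_log_of_l2_separated hw hd hF hsep hfat hdM.le
  have hbound := le_mul_sq_of_le_mul_log hw (y := log #F / d) (div_pos (by linarith) (by linarith))
    (by
      rw [div_le_iff₀ (by linarith)]
      linarith)
  rw [div_le_iff₀ (by linarith)] at hbound
  linarith

end L2Entropy

section Nets

lemma exists_net_of_card_le {β : Type*} {T : Set β} {R : β → β → Prop} [Std.Symm R] {B : ℝ}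
    (hB : ∀ F : Finset β, (F : Set β) ⊆ T → (F : Set β).Pairwise R → (#F : ℝ) ≤ B) :
    ∃ F : Finset β, (F : Set β) ⊆ T ∧ (#F : ℝ) ≤ B ∧ ∀ t ∈ T, ∃ f ∈ F, t = f ∨ ¬ R t f := by
  classical
  let sizes : Set ℕ := {k | ∃ F : Finset β, (F : Set β) ⊆ T ∧ (F : Set β).Pairwise R ∧ #F = k}
  have hbdd : BddAbove sizes := by
    refine ⟨⌊B⌋₊, ?_⟩
    rintro _ ⟨F, hFT, hF, rfl⟩
    exact Nat.le_floor (hB F hFT hF)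
  have hne : sizes.Nonempty := ⟨0, ∅, by simp⟩
  obtain ⟨F, hFT, hF, hmax⟩ := Nat.sSup_mem hne hbdd
  refine ⟨F, hFT, hB F hFT hF, fun t ht ↦ ?_⟩
  by_contra! hfar
  have htF : t ∉ F := fun h ↦ (hfar t h).1 rfl
  have hins : #(insert t F) ∈ sizes := by
    refine ⟨insert t F, ?_, ?_, rfl⟩ <;> rw [coe_insert]
    · exact Set.insert_subset ht hFT
    · exact Set.pairwise_insert_of_symm.2 ⟨hF, fun f hf _ ↦ (hfar f hf).2⟩
  have hle := le_csSup hbdd hins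
  rw [card_insert_of_notMem htF, ← hmax] at hle
  omega

lemma exists_l2_net {ι : Type*} [Fintype ι] {T : Set (ι → ℝ)} {δ d : ℝ} (hδ : 0 < δ)
    (hδ1 : δ ≤ 1) (hd : 1 ≤ d) (hT : ∀ f ∈ T, ∀ i, |f i| ≤ 1) (hfat : FatDimLE T (δ / 28) d) :
    ∃ N : Finset (ι → ℝ), (N : Set (ι → ℝ)) ⊆ T ∧ (#N : ℝ) ≤ exp (100 * d / δ) ∧
      ∀ t ∈ T, ∃ f ∈ N, ∑ i, (t i - f i) ^ 2 ≤ δ ^ 2 * Fintype.card ι := by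
  let R (f g : ι → ℝ) : Prop := δ ^ 2 * Fintype.card ι < ∑ i, (f i - g i) ^ 2
  have : Std.Symm R := ⟨fun f g hfg ↦ by simpa only [R, sub_sq_comm] using hfg⟩
  obtain ⟨N, hNT, hcard, hnet⟩ := exists_net_of_card_le (T := T) (R := R) fun F hFT hF ↦
    card_le_exp_of_l2_separated hδ hδ1 hd (fun f hf ↦ hT f (hFT hf))
      (fun q hq ↦ (hF (mem_offDiag.1 hq).1 (mem_offDiag.1 hq).2.1 (mem_offDiag.1 hq).2.2).le)
      (hfat.mono hFT)
  refine ⟨N, hNT, hcard, fun t ht ↦ ?_⟩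
  obtain ⟨f, hf, rfl | hclose⟩ := hnet t ht
  · exact ⟨t, hf, by simp only [sub_self, zero_pow two_ne_zero, sum_const_zero]; positivity⟩
  · exact ⟨f, hf, not_lt.1 hclose⟩

end Nets

section Rademacher

variable {ι : Type*} [Fintype ι]

/-- The Rademacher sum `∑ i, ± v i` with the signs prescribed by `b`, as a linear form in `v`.
Averaging over all `b` is the expectation over independent uniform signs. -/
def rademacherSum (b : ι → Bool) : (ι → ℝ) →ₗ[ℝ] ℝ := ∑ i, bval (b i) • LinearMap.proj i

lemma rademacherSum_apply (b : ι → Bool) (v : ι → ℝ) :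
    rademacherSum b v = ∑ i, bval (b i) * v i := by
  simp [rademacherSum]

lemma bval_not (b : Bool) : bval (!b) = -bval b := by cases b <;> simp [bval]

lemma rademacherSum_le_mul_card {δ : ℝ} (hδ : 0 ≤ δ) {v : ι → ℝ}
    (hv : ∑ i, v i ^ 2 ≤ δ ^ 2 * Fintype.card ι) (b : ι → Bool) :
    rademacherSum b v ≤ δ * Fintype.card ι := by
  refine abs_le_of_sq_le_sq' ?_ (by positivity) |>.2
  have hb : ∀ i, bval (b i) ^ 2 = 1 := fun i ↦ by cases b i <;> simp [bval]
  calc rademacherSum b v ^ 2 ≤ (∑ i, bval (b i) ^ 2) * ∑ i, v i ^ 2 := by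
        rw [rademacherSum_apply]
        exact sum_mul_sq_le_sq_mul_sq _ _ _
    _ ≤ Fintype.card ι * (δ ^ 2 * Fintype.card ι) := by
        simp only [hb, sum_const, card_univ, nsmul_one]
        gcongr
    _ = (δ * Fintype.card ι) ^ 2 := by ring

variable [DecidableEq ι]

lemma expect_rademacherSum (v : ι → ℝ) : 𝔼 b : ι → Bool, rademacherSum b v = 0 := by
  have hflip : 𝔼 b : ι → Bool, rademacherSum b v = 𝔼 b : ι → Bool, -rademacherSum b v :=
    Fintype.expect_equiv (Equiv.piCongrRight fun _ ↦ Equiv.boolNot) _ _ fun b ↦ by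
      simp [rademacherSum_apply, bval_not]
  rw [expect_neg_distrib] at hflip
  linarith

lemma expect_exp_rademacherSum_le (v : ι → ℝ) :
    𝔼 b : ι → Bool, exp (rademacherSum b v) ≤ exp ((∑ i, v i ^ 2) / 2) := by
  have hcosh : ∀ i, ∑ o, exp (bval o * v i) = 2 * cosh (v i) := fun i ↦ by
    rw [Fintype.sum_bool, cosh_eq]
    simp only [bval, if_true, Bool.false_eq_true, if_false]
    ring_nf
  calc 𝔼 b : ι → Bool, exp (rademacherSum b v)
      = (∏ i, ∑ o, exp (bval o * v i)) / 2 ^ Fintype.card ι := by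
        rw [Fintype.prod_sum, Fintype.expect_eq_sum_div_card]
        simp [rademacherSum_apply, exp_sum]
    _ = ∏ i, cosh (v i) := by
        simp only [hcosh, prod_mul_distrib, prod_const, card_univ]
        field_simp
    _ ≤ ∏ i, exp (v i ^ 2 / 2) :=
        prod_le_prod (fun i _ ↦ (cosh_pos _).le) fun i _ ↦ cosh_le_exp_half_sq _
    _ = exp ((∑ i, v i ^ 2) / 2) := by rw [← exp_sum, sum_div]

lemma mul_expect_rademacherSum_le {A : Finset (ι → ℝ)} {a : (ι → Bool) → ι → ℝ} {V L : ℝ}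
    (ha : ∀ b, a b ∈ A) (hV : ∀ v ∈ A, ∑ i, v i ^ 2 ≤ V) (hA : (#A : ℝ) ≤ exp L) (l : ℝ) :
    l * 𝔼 b, rademacherSum b (a b) ≤ L + l ^ 2 * V / 2 := by
  set c := L + l ^ 2 * V / 2 with hc
  have hmgf : ∀ v ∈ A, 𝔼 b : ι → Bool, exp (rademacherSum b (l • v)) ≤ exp (l ^ 2 * V / 2) := by
    intro v hv
    refine (expect_exp_rademacherSum_le _).trans (exp_le_exp.2 ?_)
    simp only [Pi.smul_apply, smul_eq_mul, mul_pow, ← mul_sum]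
    gcongr
    exact hV v hv
  have hpoint : ∀ b : ι → Bool, l * rademacherSum b (a b) - c + 1 ≤
      exp (-c) * ∑ v ∈ A, exp (rademacherSum b (l • v)) := by
    intro b
    calc l * rademacherSum b (a b) - c + 1 ≤ exp (l * rademacherSum b (a b) - c) :=
          add_one_le_exp _
      _ = exp (-c) * exp (rademacherSum b (l • a b)) := by
          rw [← exp_add, map_smul, smul_eq_mul, neg_add_eq_sub]
      _ ≤ _ := by
          gcongr
          exact single_le_sum (f := fun v ↦ exp (rademacherSum b (l • v)))
            (fun _ _ ↦ (exp_pos _).le) (ha b)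
  have hmean : l * 𝔼 b, rademacherSum b (a b) - c + 1 ≤ 1 := by
    calc l * 𝔼 b, rademacherSum b (a b) - c + 1
        = 𝔼 b, (l * rademacherSum b (a b) - c + 1) := by
          rw [expect_add_distrib, expect_sub_distrib, Fintype.expect_const, Fintype.expect_const,
            mul_expect]
      _ ≤ 𝔼 b : ι → Bool, exp (-c) * ∑ v ∈ A, exp (rademacherSum b (l • v)) :=
          expect_le_expect fun b _ ↦ hpoint b
      _ = exp (-c) * ∑ v ∈ A, 𝔼 b : ι → Bool, exp (rademacherSum b (l • v)) := by
          rw [← mul_expect, expect_sum_comm]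
      _ ≤ exp (-c) * ∑ _v ∈ A, exp (l ^ 2 * V / 2) := by
          gcongr with v hv
          exact hmgf v hv
      _ ≤ exp (-c) * (exp L * exp (l ^ 2 * V / 2)) := by
          rw [sum_const, nsmul_eq_mul]
          gcongr
      _ = 1 := by rw [← exp_add, ← hc, ← exp_add, neg_add_cancel, exp_zero]
  linarith

/-- Massart's finite class lemma. -/
lemma expect_rademacherSum_le_sqrt {A : Finset (ι → ℝ)} {a : (ι → Bool) → ι → ℝ} {V L : ℝ}
    (ha : ∀ b, a b ∈ A) (hV : ∀ v ∈ A, ∑ i, v i ^ 2 ≤ V) (hA : (#A : ℝ) ≤ exp L) :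
    𝔼 b, rademacherSum b (a b) ≤ √(2 * V * L) := by
  have hdiscrim := discrim_le_zero (a := V / 2) (b := -𝔼 b, rademacherSum b (a b)) (c := L)
    fun l ↦ by nlinarith [mul_expect_rademacherSum_le ha hV hA l]
  refine le_sqrt_of_sq_le ?_
  rw [discrim] at hdiscrim
  linarith

lemma expect_rademacherSum_sub_le_sqrt {P Q : Finset (ι → ℝ)} {p q : (ι → Bool) → ι → ℝ}
    {V L : ℝ} (hp : ∀ b, p b ∈ P) (hq : ∀ b, q b ∈ Q)
    (hV : ∀ b, ∑ i, (p b i - q b i) ^ 2 ≤ V) (hPQ : (#P * #Q : ℝ) ≤ exp L) :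
    𝔼 b, rademacherSum b (p b) - 𝔼 b, rademacherSum b (q b) ≤ √(2 * V * L) := by
  classical
  let A : Finset (ι → ℝ) :=
    {v ∈ (P ×ˢ Q).image fun pq ↦ pq.1 - pq.2 | ∑ i, v i ^ 2 ≤ V}
  have hA : #A ≤ #P * #Q :=
    (card_filter_le _ _).trans (card_image_le.trans_eq (card_product _ _))
  have hmem : ∀ b, p b - q b ∈ A := fun b ↦
    mem_filter.2 ⟨mem_image.2 ⟨(p b, q b), mk_mem_product (hp b) (hq b), rfl⟩, hV b⟩
  rw [← expect_sub_distrib]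
  simp only [← map_sub]
  exact expect_rademacherSum_le_sqrt hmem (fun v hv ↦ (mem_filter.1 hv).2)
    (le_trans (mod_cast hA) hPQ)

end Rademacher

section Chaining

variable {ι : Type*} [Fintype ι]

lemma sum_sub_sq_le {f p q : ι → ℝ} {A B : ℝ} (hp : ∑ i, (f i - p i) ^ 2 ≤ A)
    (hq : ∑ i, (f i - q i) ^ 2 ≤ B) : ∑ i, (q i - p i) ^ 2 ≤ 5 / 4 * A + 5 * B :=
  calc ∑ i, (q i - p i) ^ 2 ≤ ∑ i, (5 / 4 * (f i - p i) ^ 2 + 5 * (f i - q i) ^ 2) :=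
        sum_le_sum fun i _ ↦ by nlinarith [sq_nonneg ((f i - p i) / 2 + 2 * (f i - q i))]
    _ = 5 / 4 * ∑ i, (f i - p i) ^ 2 + 5 * ∑ i, (f i - q i) ^ 2 := by
        rw [sum_add_distrib, mul_sum, mul_sum]
    _ ≤ 5 / 4 * A + 5 * B := by gcongr

variable [DecidableEq ι]

lemma expect_rademacherSum_sub_le_of_nets {P Q : Finset (ι → ℝ)} {f p q : (ι → Bool) → ι → ℝ}
    {d u : ℝ} (hd : 0 ≤ d) (hu : 0 < u) (hp : ∀ b, p b ∈ P) (hq : ∀ b, q b ∈ Q)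
    (hP : (#P : ℝ) ≤ exp (100 * d / u ^ 2)) (hQ : (#Q : ℝ) ≤ exp (100 * d / (u / 2) ^ 2))
    (hfp : ∀ b, ∑ i, (f b i - p b i) ^ 2 ≤ (u ^ 2) ^ 2 * Fintype.card ι)
    (hfq : ∀ b, ∑ i, (f b i - q b i) ^ 2 ≤ ((u / 2) ^ 2) ^ 2 * Fintype.card ι) :
    𝔼 b, rademacherSum b (q b) - 𝔼 b, rademacherSum b (p b) ≤
      4 * u * √(100 * d * Fintype.card ι) := by
  have hV : ∀ b, ∑ i, (q b i - p b i) ^ 2 ≤ 25 / 16 * u ^ 4 * Fintype.card ι := fun b ↦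
    (sum_sub_sq_le (hfp b) (hfq b)).trans_eq (by ring)
  have hQP : (#Q * #P : ℝ) ≤ exp (500 * d / u ^ 2) := by
    calc (#Q * #P : ℝ) ≤ exp (100 * d / (u / 2) ^ 2) * exp (100 * d / u ^ 2) := by gcongr
      _ = exp (500 * d / u ^ 2) := by rw [← exp_add]; congr 1; field_simp; ring
  refine (expect_rademacherSum_sub_le_sqrt hq hp hV hQP).trans ?_
  refine sqrt_le_iff.2 ⟨by positivity, ?_⟩
  rw [mul_pow, sq_sqrt (by positivity)]
  calc 2 * (25 / 16 * u ^ 4 * Fintype.card ι) * (500 * d / u ^ 2)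
      = 15.625 * (u ^ 2 * (100 * d * Fintype.card ι)) := by field_simp; ring
    _ ≤ 16 * (u ^ 2 * (100 * d * Fintype.card ι)) := by gcongr; norm_num
    _ = (4 * u) ^ 2 * (100 * d * Fintype.card ι) := by ring

lemma exists_net_expect_rademacherSum_le {T : Set (ι → ℝ)} {d : ℝ} (hd : 1 ≤ d)
    (hT : ∀ f ∈ T, ∀ i, |f i| ≤ 1) {f : (ι → Bool) → ι → ℝ} (hf : ∀ b, f b ∈ T) (J : ℕ)
    (hfat : FatDimLE T (((1 / 2) ^ J) ^ 2 / 28) d) :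
    ∃ (P : Finset (ι → ℝ)) (p : (ι → Bool) → ι → ℝ), (∀ b, p b ∈ P) ∧
      (#P : ℝ) ≤ exp (100 * d / ((1 / 2) ^ J) ^ 2) ∧
      (∀ b, ∑ i, (f b i - p b i) ^ 2 ≤ (((1 / 2) ^ J) ^ 2) ^ 2 * Fintype.card ι) ∧
      𝔼 b, rademacherSum b (p b) ≤ 8 * (1 - (1 / 2) ^ J) * √(100 * d * Fintype.card ι) := by
  induction J with
  | zero =>
    refine ⟨{0}, 0, by simp, by simpa using by positivity, fun b ↦ ?_, by simp⟩
    calc ∑ i, (f b i - 0) ^ 2 ≤ ∑ _i : ι, (1 : ℝ) :=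
          sum_le_sum fun i _ ↦ by simpa using (sq_le_one_iff_abs_le_one _).2 (hT _ (hf b) i)
      _ = _ := by simp
  | succ J ih =>
    set u : ℝ := (1 / 2) ^ J with hu
    have hu0 : 0 < u := by positivity
    have hu1 : u ≤ 1 := pow_le_one₀ (by norm_num) (by norm_num)
    have hu2 : (1 / 2 : ℝ) ^ (J + 1) = u / 2 := by rw [hu]; ring
    rw [hu2] at hfat ⊢
    obtain ⟨P, p, hp, hP, hfp, hsum⟩ := ih (hfat.anti (by gcongr; linarith))
    obtain ⟨Q, -, hQ, hnet⟩ := exists_l2_net (by positivity) (by nlinarith) hd hT hfat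
    choose q hq hfq using fun b ↦ hnet (f b) (hf b)
    refine ⟨Q, q, hq, hQ, hfq, ?_⟩
    have hstep := expect_rademacherSum_sub_le_of_nets (by linarith) hu0 hp hq hP hQ hfp hfq
    linarith

/-- Chaining: `f b` is reached from `0` through nets at the scales `4⁻ʲ`, whose entropies
`100 d 4ʲ` make the steps `√(4⁻²ʲ n · d 4ʲ)` of a convergent geometric sum. -/
lemma expect_rademacherSum_le_of_fatDimLE {T : Set (ι → ℝ)} {d : ℝ} (hd : 1 ≤ d)
    (hT : ∀ f ∈ T, ∀ i, |f i| ≤ 1) {f : (ι → Bool) → ι → ℝ} (hf : ∀ b, f b ∈ T) (J : ℕ)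
    (hfat : FatDimLE T (((1 / 2) ^ J) ^ 2 / 28) d) :
    𝔼 b, rademacherSum b (f b) ≤
      8 * √(100 * d * Fintype.card ι) + ((1 / 2) ^ J) ^ 2 * Fintype.card ι := by
  obtain ⟨P, p, -, -, hfp, hsum⟩ := exists_net_expect_rademacherSum_le hd hT hf J hfat
  have htail : 𝔼 b, rademacherSum b (f b - p b) ≤ ((1 / 2) ^ J) ^ 2 * Fintype.card ι :=
    expect_le univ_nonempty fun b _ ↦ rademacherSum_le_mul_card (by positivity) (hfp b) b
  simp only [map_sub, expect_sub_distrib] at htail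
  have hpos : 0 ≤ (1 / 2 : ℝ) ^ J * √(100 * d * Fintype.card ι) := by positivity
  linarith

end Chaining

section ConvexHull

variable {X : Type*} {G H : Set (X → ℝ)} {α : ℝ} {n : ℕ} {x : Fin n → X} {r : Fin n → ℝ}

lemma abs_sub_le_of_mem_convexHull {f₀ : X → ℝ} {c : ℝ} (hH : ∀ h ∈ H, ∀ y, |h y - f₀ y| ≤ c) :
    ∀ f ∈ convexHull ℝ H, ∀ y, |f y - f₀ y| ≤ c := by
  intro f hf y
  have hconvex : Convex ℝ (LinearMap.proj y ⁻¹' Metric.closedBall (f₀ y) c : Set (X → ℝ)) :=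
    (convex_closedBall _ _).linear_preimage (LinearMap.proj (R := ℝ) (φ := fun _ : X ↦ ℝ) y)
  exact convexHull_min (fun h hh ↦ hH h hh y) hconvex hf

lemma abs_le_of_mem_convexHull {c : ℝ} (hH : ∀ h ∈ H, ∀ y, |h y| ≤ c) :
    ∀ f ∈ convexHull ℝ H, ∀ y, |f y| ≤ c := by
  simpa using abs_sub_le_of_mem_convexHull (f₀ := 0) (by simpa using hH)

lemma FatShatters.le_of_abs_le {c : ℝ} (hx : FatShatters G α x r) (hn : 0 < n)
    (hG : ∀ g ∈ G, ∀ y, |g y| ≤ c) : α ≤ c := by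
  obtain ⟨f, hf, hfr⟩ := hx fun _ ↦ true
  obtain ⟨g, hg, hgr⟩ := hx fun _ ↦ false
  have hup := (hfr ⟨0, hn⟩).1 rfl
  have hlo := (hgr ⟨0, hn⟩).2 rfl
  linarith [(abs_le.1 (hG f hf (x ⟨0, hn⟩))).2, (abs_le.1 (hG g hg (x ⟨0, hn⟩))).1]

lemma exists_le_rademacherSum_of_fatShatters_convexHull
    (hx : FatShatters (convexHull ℝ H) α x r) (b : Fin n → Bool) :
    ∃ h ∈ H, n * α + rademacherSum b r ≤ rademacherSum b (h ∘ x) := by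
  obtain ⟨f, hf, hfr⟩ := hx b
  have hle : n * α + rademacherSum b r ≤ rademacherSum b (f ∘ x) := by
    calc n * α + rademacherSum b r = ∑ i, (α + bval (b i) * r i) := by
          simp [sum_add_distrib, rademacherSum_apply]
      _ ≤ ∑ i, bval (b i) * f (x i) := sum_le_sum fun i _ ↦ by
          cases hb : b i
          · have := (hfr i).2 hb
            simp only [bval, Bool.false_eq_true, if_false]
            linarith
          · have := (hfr i).1 hb
            simp only [bval, if_true]
            linarith
      _ = rademacherSum b (f ∘ x) := (rademacherSum_apply _ _).symm
  let φ : (X → ℝ) →ₗ[ℝ] ℝ := rademacherSum b ∘ₗ LinearMap.funLeft ℝ ℝ x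
  obtain ⟨h, hh, hfh⟩ :=
    (φ.convexOn convex_univ).exists_ge_of_mem_convexHull (Set.subset_univ H) hf
  exact ⟨h, hh, hle.trans hfh⟩

lemma mul_le_of_fatShatters_convexHull {d : ℝ} (hd : 1 ≤ d) (hH : ∀ h ∈ H, ∀ y, |h y| ≤ 1)
    (J : ℕ) (hfat : FatDimLE H (((1 / 2) ^ J) ^ 2 / 28) d)
    (hx : FatShatters (convexHull ℝ H) α x r) :
    n * α ≤ 8 * √(100 * d * n) + ((1 / 2) ^ J) ^ 2 * n := by
  choose h hh hle using exists_le_rademacherSum_of_fatShatters_convexHull hx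
  calc n * α = 𝔼 b : Fin n → Bool, (n * α + rademacherSum b r) := by
        rw [expect_add_distrib, expect_rademacherSum, Fintype.expect_const, add_zero]
    _ ≤ 𝔼 b, rademacherSum b (h b ∘ x) := expect_le_expect fun b _ ↦ hle b
    _ ≤ 8 * √(100 * d * n) + ((1 / 2) ^ J) ^ 2 * n := by
        simpa only [Fintype.card_fin] using expect_rademacherSum_le_of_fatDimLE hd
          (Set.forall_mem_image.2 fun h hh i ↦ hH h hh (x i))
          (fun b ↦ Set.mem_image_of_mem (· ∘ x) (hh b)) J hfat.comp

/-- Averaged over the signs, the convex hull does no better than `H`, whose Rademacher average is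
controlled by chaining; stopping the chain near `α / 2` leaves `n α ≤ 16 √(100 d n)`. -/
lemma fatDimLE_convexHull {d : ℝ} (hfat : FatDimLE H (α / 224) d) (hα : 0 < α) (hd : 1 ≤ d)
    (hH : ∀ h ∈ H, ∀ y, |h y| ≤ 1) : FatDimLE (convexHull ℝ H) α (25600 * d / α ^ 2) := by
  intro n x r hx
  rcases n.eq_zero_or_pos with rfl | hn
  · rw [Nat.cast_zero]; positivity
  have hα1 : α ≤ 1 := hx.le_of_abs_le hn (abs_le_of_mem_convexHull hH)
  obtain ⟨j, hj, hj'⟩ := exists_nat_pow_near_of_lt_one (x := α / 2) (y := 1 / 4) (by positivity)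
    (by linarith) (by norm_num) (by norm_num)
  have hpow : ((1 / 2 : ℝ) ^ (j + 1)) ^ 2 = (1 / 4) ^ (j + 1) := by rw [pow_right_comm]; norm_num
  have hscale : α / 224 ≤ ((1 / 2) ^ (j + 1)) ^ 2 / 28 := by rw [hpow, pow_succ]; linarith
  have hn0 : (0 : ℝ) < n := mod_cast hn
  have hchain := mul_le_of_fatShatters_convexHull hd hH (j + 1) (hfat.anti hscale) hx
  have htail : ((1 / 2 : ℝ) ^ (j + 1)) ^ 2 * n ≤ α / 2 * n := by rw [hpow]; gcongr
  have hsq : (n * α) ^ 2 ≤ (16 * √(100 * d * n)) ^ 2 :=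
    pow_le_pow_left₀ (by positivity) (by linarith) 2
  rw [mul_pow 16, sq_sqrt (by positivity)] at hsq
  rw [le_div_iff₀ (by positivity)]
  exact le_of_mul_le_mul_left (by linarith) hn0

end ConvexHull

section SupCover

variable {ι : Type*} {c θ D : ℝ} {b K : ℕ}

/-- The function `g` overwritten by the grid values `ℓ θ - c` at the places where the pattern `s`
prescribes a level `ℓ`. -/
def patch (c θ : ℝ) (g : ι → ℝ) (s : ι → Option (Fin b)) (i : ι) : ℝ :=
  (s i).elim (g i) fun ℓ ↦ ℓ * θ - c

lemma exists_abs_sub_patch_le [Fintype ι] {f g : ι → ℝ} (hθ : 0 < θ) (hb : 2 * c / θ < b + 1)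
    (hf : ∀ i, |f i| ≤ c) (hfg : (#{i | 7 * θ ≤ |f i - g i|} : ℝ) ≤ D) :
    ∃ s : ι → Option (Fin (b + 1)), (#{i | (s i).isSome} : ℝ) ≤ D ∧
      ∀ i, |f i - patch c θ g s i| ≤ 7 * θ := by
  have hlevel : ∀ i, ∃ ℓ : Fin (b + 1), |f i - (ℓ * θ - c)| ≤ θ := fun i ↦ by
    have hnonneg : 0 ≤ (f i + c) / θ := div_nonneg (by linarith [abs_le.1 (hf i)]) hθ.le
    have hlt : ⌊(f i + c) / θ⌋₊ < b + 1 := (Nat.floor_lt hnonneg).2 <| by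
      refine lt_of_le_of_lt ?_ (mod_cast hb)
      gcongr
      linarith [abs_le.1 (hf i)]
    have hlo := Nat.floor_le hnonneg
    have hhi := Nat.lt_floor_add_one ((f i + c) / θ)
    rw [le_div_iff₀ hθ] at hlo
    rw [div_lt_iff₀ hθ] at hhi
    exact ⟨⟨_, hlt⟩, abs_le.2 ⟨by linarith, by linarith⟩⟩
  choose lev hlev using hlevel
  refine ⟨fun i ↦ if 7 * θ ≤ |f i - g i| then some (lev i) else none, ?_, fun i ↦ ?_⟩
  · simpa using hfg
  · by_cases hi : 7 * θ ≤ |f i - g i|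
    · simpa only [patch, if_pos hi, Option.elim_some] using
        (hlev i).trans (by linarith)
    · simpa only [patch, if_neg hi, Option.elim_none] using (not_le.1 hi).le

/-- A maximal family of functions pairwise far apart on `D` coordinates is small by
`card_le_of_separated`; every other function is close to one of them off `D` coordinates, and
there it is patched by a pattern. -/
lemma exists_sup_cover [Fintype ι] {T : Set (ι → ℝ)}
    (hK : 8 ≤ D / Fintype.card ι * 2 ^ (K ^ 2)) (hθ : 0 < θ) (hb : 2 * c / θ < b + 1)
    (hT : ∀ f ∈ T, ∀ i, |f i| ≤ c) (hD : 0 < D) (hDn : D ≤ Fintype.card ι * b)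
    (hfat : FatDimLE T (θ / 2) D) :
    ∃ V : Finset (ι → ℝ),
      (#V : ℝ) ≤ ((exp 1 * (Fintype.card ι * (b + 1)) / D) ^ D) ^ (K + 1) ∧
      ∀ f ∈ T, ∃ v ∈ V, ∀ i, |f i - v i| ≤ 7 * θ := by
  classical
  have hn : (0 : ℝ) < Fintype.card ι := pos_of_mul_pos_left (hD.trans_le hDn) (by positivity)
  let R (f g : ι → ℝ) : Prop := D ≤ #{i | 7 * θ ≤ |f i - g i|}
  have : Std.Symm R := ⟨fun f g hfg ↦ by simpa only [R, abs_sub_comm] using hfg⟩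
  obtain ⟨N, hNT, hN, hnet⟩ := exists_net_of_card_le (T := T) (R := R) fun F hFT hF ↦
    card_le_of_separated hK hθ hb (fun f hf ↦ hT f (hFT hf))
      (fun q hq ↦ by
        rw [div_mul_cancel₀ _ hn.ne']
        exact hF (mem_offDiag.1 hq).1 (mem_offDiag.1 hq).2.1 (mem_offDiag.1 hq).2.2)
      hD hDn (hfat.mono hFT)
  let S : Set (ι → Option (Fin (b + 1))) := {s | (#{i | (s i).isSome} : ℝ) ≤ D}
  have hS : (#S.toFinset : ℝ) ≤ (exp 1 * (Fintype.card ι * (b + 1)) / D) ^ D := by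
    rw [← Set.ncard_eq_toFinset_card']
    simpa using ncard_le_rpow_of_card_isSome_le hD (α := Fin (b + 1))
      (hDn.trans (by rw [Fintype.card_fin]; gcongr; simp)) fun s (hs : s ∈ S) ↦ hs
  have hmono : (exp 1 * (Fintype.card ι * b) / D) ^ D ≤
      (exp 1 * (Fintype.card ι * (b + 1)) / D) ^ D := by
    gcongr
    exact le_add_of_nonneg_right zero_le_one
  refine ⟨image₂ (patch c θ) N S.toFinset, ?_, fun f hf ↦ ?_⟩
  · calc (#(image₂ (patch c θ) N S.toFinset) : ℝ) ≤ #N * #S.toFinset :=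
          mod_cast card_image₂_le (patch c θ) N S.toFinset
      _ ≤ ((exp 1 * (Fintype.card ι * (b + 1)) / D) ^ D) ^ K *
            (exp 1 * (Fintype.card ι * (b + 1)) / D) ^ D :=
          mul_le_mul (hN.trans (pow_le_pow_left₀ (by positivity) hmono K)) hS (by positivity)
            (by positivity)
      _ = ((exp 1 * (Fintype.card ι * (b + 1)) / D) ^ D) ^ (K + 1) := (pow_succ _ _).symm
  · obtain ⟨g, hg, hfg⟩ := hnet f hf
    have hclose : (#{i | 7 * θ ≤ |f i - g i|} : ℝ) ≤ D := by
      obtain rfl | hfg := hfg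
      · simpa [(by linarith : ¬ 7 * θ ≤ 0)] using hD.le
      · exact (not_le.1 hfg).le
    obtain ⟨s, hs, hfs⟩ := exists_abs_sub_patch_le hθ hb (hT f hf) hclose
    exact ⟨_, mem_image₂_of_mem hg (Set.mem_toFinset.2 hs), hfs⟩

end SupCover

section CoverOfValues

variable {X : Type*} {m : ℕ}

lemma exists_extend_apply_eq (x : Fin m → X) (v : Fin m → ℝ) (i : Fin m) :
    ∃ j, x j = x i ∧ Function.extend x v 0 (x i) = v j := by
  classical
  have hi : ∃ j, x j = x i := ⟨i, rfl⟩
  exact ⟨hi.choose, hi.choose_spec, by rw [Function.extend_def, dif_pos hi]⟩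

lemma isCover_image_extend {x : Fin m → X} {G : Set (X → ℝ)} {ε : ℝ} {V : Set (Fin m → ℝ)}
    (hV : ∀ v ∈ (· ∘ x) '' G, ∃ w ∈ V, ∀ i, |v i - w i| ≤ ε) :
    IsCover x G ε ((fun w ↦ Function.extend x w 0) '' V) := by
  intro g hg
  obtain ⟨w, hw, hgw⟩ := hV _ (Set.mem_image_of_mem _ hg)
  refine ⟨_, Set.mem_image_of_mem _ hw, fun i ↦ ?_⟩
  obtain ⟨j, hji, hj⟩ := exists_extend_apply_eq x w i
  simpa only [hj, Function.comp_apply, hji] using hgw j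

end CoverOfValues

section Entropy

lemma exists_nat_mul_le_two_pow_sq {q z : ℝ} (hq : 1 ≤ q) (hz : 8 ≤ z) :
    ∃ K : ℕ, 8 * q ≤ 2 ^ (K ^ 2) ∧ (K : ℝ) + 1 ≤ 4 * √(log (q * z)) := by
  have hlog : 1 ≤ √(log (q * z)) := by
    refine one_le_sqrt.2 ((le_log_iff_exp_le (by positivity)).2 ?_)
    nlinarith [exp_one_lt_d9]
  set R := √(log (q * z))
  have hR2 : R ^ 2 = log (q * z) := sq_sqrt (log_nonneg (by nlinarith))
  refine ⟨⌈2 * R⌉₊, ?_, by linarith [Nat.ceil_lt_add_one (by linarith : 0 ≤ 2 * R)]⟩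
  calc 8 * q ≤ q * z := by nlinarith
    _ = exp (R ^ 2) := by rw [hR2, exp_log (by positivity)]
    _ ≤ exp (log 2 * ⌈2 * R⌉₊ ^ 2) := by
        gcongr
        calc R ^ 2 ≤ log 2 * (2 * R) ^ 2 := by nlinarith [log_two_gt_d9, sq_nonneg R]
          _ ≤ log 2 * ⌈2 * R⌉₊ ^ 2 := by
            gcongr
            exact Nat.le_ceil _
    _ = 2 ^ (⌈2 * R⌉₊ ^ 2) := by
        rw [mul_comm, ← Nat.cast_pow, exp_nat_mul, exp_log two_pos]

lemma log_exp_one_mul_le {q z b : ℝ} (hq : 1 ≤ q) (hz : 8 ≤ z) (hb0 : 0 ≤ b) (hb : b ≤ 7 * z) :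
    log (exp 1 * (q * (b + 1))) ≤ 3 * log (q * z) := by
  have hcube : exp 1 * (q * (b + 1)) ≤ (q * z) ^ 3 :=
    calc exp 1 * (q * (b + 1)) ≤ 3 * (q * (8 * z)) := by
          gcongr
          · linarith [exp_one_lt_d9]
          · linarith
      _ ≤ q * z * 8 ^ 2 := by nlinarith
      _ ≤ q * z * (q * z) ^ 2 := by
          gcongr
          nlinarith
      _ = (q * z) ^ 3 := by ring
  calc log (exp 1 * (q * (b + 1))) ≤ log ((q * z) ^ 3) := log_le_log (by positivity) hcube
    _ = 3 * log (q * z) := by rw [log_pow, Nat.cast_ofNat]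

lemma exists_chain_length_and_grid_size {q z : ℝ} (hq : 1 ≤ q) (hz : 8 ≤ z) :
    ∃ K b : ℕ, 8 * q ≤ 2 ^ (K ^ 2) ∧ 1 ≤ b ∧ 7 * z < b + 1 ∧
      (K + 1) * log (exp 1 * (q * (b + 1))) ≤ 12 * log (q * z) ^ (3 / 2 : ℝ) := by
  obtain ⟨K, hK, hK'⟩ := exists_nat_mul_le_two_pow_sq hq hz
  have hfloor : 1 ≤ ⌊7 * z⌋₊ := Nat.le_floor (by push_cast; linarith)
  refine ⟨K, ⌊7 * z⌋₊, hK, hfloor, Nat.lt_floor_add_one _, ?_⟩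
  have hL : 0 < log (q * z) := log_pos (by nlinarith)
  have hlog := log_exp_one_mul_le hq hz (Nat.cast_nonneg _) (Nat.floor_le (by linarith))
  have hlog_nonneg : 0 ≤ log (exp 1 * (q * (⌊7 * z⌋₊ + 1))) := log_nonneg <|
    one_le_mul_of_one_le_of_one_le (one_le_exp zero_le_one) <|
      one_le_mul_of_one_le_of_one_le hq (by simp)
  calc (K + 1) * log (exp 1 * (q * (⌊7 * z⌋₊ + 1))) ≤ 4 * √(log (q * z)) * (3 * log (q * z)) := by
        gcongr
    _ = 12 * (log (q * z) ^ (1 / 2 : ℝ) * log (q * z) ^ (1 : ℝ)) := by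
        rw [sqrt_eq_rpow, rpow_one]
        ring
    _ = 12 * log (q * z) ^ (3 / 2 : ℝ) := by rw [← rpow_add hL]; norm_num

lemma log_natCast_le_of_le_exp {k : ℕ} {E : ℝ} (hE : 0 ≤ E) (hk : (k : ℝ) ≤ exp E) :
    log k ≤ E := by
  obtain rfl | hk0 := k.eq_zero_or_pos
  · simpa using hE
  · exact (log_le_iff_le_exp (mod_cast hk0)).2 hk

lemma exists_isCover_log_card_le {X : Type*} {G : Set (X → ℝ)} {m : ℕ} {c η D : ℝ}
    (x : Fin m → X) (hη : 0 < η) (hηc : 4 * η ≤ c) (hG : ∀ g ∈ G, ∀ y, |g y| ≤ c) (hD : 0 < D)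
    (hDm : D ≤ m) (hfat : FatDimLE G (η / 14) D) :
    ∃ N : Finset (X → ℝ), IsCover x G η N ∧
      log #N ≤ 12 * D * log (m / D * (2 * c / η)) ^ (3 / 2 : ℝ) := by
  classical
  have hq : 1 ≤ m / D := (one_le_div hD).2 hDm
  have hz : 8 ≤ 2 * c / η := by rw [le_div_iff₀ hη]; linarith
  obtain ⟨K, b, hK, hb1, hb, hentropy⟩ := exists_chain_length_and_grid_size hq hz
  obtain ⟨V, hVcard, hV⟩ := exists_sup_cover (T := (· ∘ x) '' G) (c := c) (θ := η / 7) (D := D)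
    (b := b) (K := K)
    (by rwa [Fintype.card_fin, ← inv_div, inv_mul_eq_div, le_div_iff₀ (by linarith)])
    (by positivity) (by rwa [div_div_eq_mul_div, mul_div_right_comm, mul_comm])
    (Set.forall_mem_image.2 fun g hg i ↦ hG g hg (x i)) hD
    (by
      rw [Fintype.card_fin]
      exact hDm.trans (le_mul_of_one_le_right (Nat.cast_nonneg m) (mod_cast hb1)))
    (by rw [div_div]; norm_num; exact hfat.comp)
  rw [mul_div_cancel₀ η (by norm_num)] at hV
  refine ⟨V.image fun w ↦ Function.extend x w 0, by
    rw [coe_image]; exact isCover_image_extend hV, log_natCast_le_of_le_exp ?_ ?_⟩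
  · have := log_nonneg (one_le_mul_of_one_le_of_one_le hq (by linarith : 1 ≤ 2 * c / η))
    positivity
  calc (#(V.image fun w ↦ Function.extend x w 0) : ℝ) ≤ #V := mod_cast card_image_le
    _ ≤ ((exp 1 * (m / D * (b + 1))) ^ D) ^ (K + 1) := by
        rwa [Fintype.card_fin, mul_div_assoc, mul_div_right_comm] at hVcard
    _ = exp (D * ((K + 1) * log (exp 1 * (m / D * (b + 1))))) := by
        rw [rpow_def_of_pos (by positivity), ← exp_nat_mul]
        push_cast
        ring_nf
    _ ≤ exp (12 * D * log (m / D * (2 * c / η)) ^ (3 / 2 : ℝ)) := by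
        rw [mul_comm 12 D, mul_assoc]
        gcongr

end Entropy

section Truncation

variable {X : Type*} {G H : Set (X → ℝ)} {α τ D : ℝ}

lemma abs_truncAt_le (hτ : 0 ≤ τ) (f : X → ℝ) (y : X) : |truncAt τ f y| ≤ τ :=
  abs_le.2 ⟨le_max_left _ _, max_le (by linarith) (min_le_left _ _)⟩

lemma abs_truncAt_sub_truncAt_le (τ : ℝ) (f g : X → ℝ) (y : X) :
    |truncAt τ f y - truncAt τ g y| ≤ |f y - g y| :=
  calc |truncAt τ f y - truncAt τ g y| ≤ max |-τ - -τ| |min τ (f y) - min τ (g y)| :=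
        abs_max_sub_max_le_max _ _ _ _
    _ ≤ |f y - g y| := max_le (by simp) ((abs_min_sub_min_le_max _ _ _ _).trans (by simp))

/-- Both halves of each window lie in `[-τ, τ]`, where truncation does not affect the
comparisons. -/
lemma FatShatters.of_truncAt (hτ : 0 ≤ τ) (hα : 0 < α) {k : ℕ} {x : Fin k → X} {r : Fin k → ℝ}
    (hx : FatShatters (truncAt τ '' G) α x r) : FatShatters G α x r := by
  have hlo : ∀ i, -τ ≤ r i - α := by
    obtain ⟨_, ⟨f, -, rfl⟩, hf⟩ := hx fun _ ↦ false
    exact fun i ↦ (le_max_left _ _).trans ((hf i).2 rfl)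
  have hhi : ∀ i, r i + α ≤ τ := by
    obtain ⟨_, ⟨f, -, rfl⟩, hf⟩ := hx fun _ ↦ true
    exact fun i ↦ ((hf i).1 rfl).trans (max_le (by linarith) (min_le_left _ _))
  intro β
  obtain ⟨_, ⟨f, hf, rfl⟩, hfr⟩ := hx β
  refine ⟨f, hf, fun i ↦ ⟨fun hi ↦ ?_, fun hi ↦ ?_⟩⟩
  · obtain h | h := le_max_iff.1 ((hfr i).1 hi)
    · linarith [hlo i]
    · exact h.trans (min_le_right _ _)
  · obtain h | h := min_le_iff.1 ((le_max_right _ _).trans ((hfr i).2 hi))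
    · linarith [hhi i]
    · exact h

lemma FatDimLE.truncAt_image (hG : FatDimLE G α D) (hτ : 0 ≤ τ) (hα : 0 < α) :
    FatDimLE (truncAt τ '' G) α D :=
  fun k x r hx ↦ hG k x r (hx.of_truncAt hτ hα)

lemma FatDimLE.abs_sub_le (hH : FatDimLE H α D) (hD : D < 1) :
    ∀ f ∈ H, ∀ g ∈ H, ∀ y, |f y - g y| ≤ 2 * α := by
  have hone : ∀ f ∈ H, ∀ g ∈ H, ∀ y, f y - g y ≤ 2 * α := by
    intro f hf g hg y
    by_contra! hgap
    have hcard := hH.card_le (κ := Unit) (x := fun _ ↦ y) (r := fun _ ↦ (f y + g y) / 2) fun β ↦ by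
      cases hβ : β ()
      · exact ⟨g, hg, fun _ ↦ by simpa [hβ] using (by linarith : g y ≤ (f y + g y) / 2 - α)⟩
      · exact ⟨f, hf, fun _ ↦ by simpa [hβ] using (by linarith : (f y + g y) / 2 + α ≤ f y)⟩
    rw [Fintype.card_unit, Nat.cast_one] at hcard
    exact hcard.not_gt hD
  exact fun f hf g hg y ↦ abs_sub_le_iff.2 ⟨hone f hf g hg y, hone g hg f hf y⟩

lemma isCover_truncAt_convexHull_singleton {m : ℕ} (x : Fin m → X) {h : X → ℝ} {δ : ℝ}
    (hδ : ∀ f ∈ H, ∀ y, |f y - h y| ≤ δ) :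
    IsCover x (truncAt τ '' convexHull ℝ H) δ {truncAt τ h} := by
  rintro _ ⟨f, hf, rfl⟩
  exact ⟨_, rfl, fun i ↦ (abs_truncAt_sub_truncAt_le _ _ _ _).trans
    (abs_sub_le_of_mem_convexHull hδ f hf (x i))⟩

lemma IsFatDim.nonempty {d : ℕ} (hH : IsFatDim H α d) : H.Nonempty := by
  obtain ⟨⟨x, r, hx⟩, -⟩ := hH
  exact (hx fun _ ↦ true).imp fun _ hf ↦ hf.1

end Truncation

end Agb

theorem statement6_general {X : Type*} {γ γ' : ℝ} {H : Set (X → ℝ)} {m d : ℕ} (x' : Fin m → X)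
    (hγ : 0 ≤ γ) (hγγ' : γ < γ') (hH : ∀ h ∈ H, ∀ x, |h x| ≤ 1)
    (hd : IsFatDim H (1 / 6272 * (γ' - γ)) d) (hm : 20070400 * d / (γ' - γ) ^ 2 ≤ m) :
    ∃ N : Finset (X → ℝ),
      IsCover x' (truncAt (2 * γ') '' (convexHull ℝ H)) ((γ' - γ) / 2) ↑N ∧
      Real.log N.card ≤
        12 * 20070400 * d / (γ' - γ) ^ 2 *
          Real.log ((γ' - γ) ^ 2 * m / (20070400 * d) * (8 * γ' / (γ' - γ))) ^
            ((3 : ℝ) / 2) := by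
  have hε : 0 < γ' - γ := sub_pos.2 hγγ'
  obtain rfl | hd1 := d.eq_zero_or_pos
  · obtain ⟨h, hh⟩ := hd.nonempty
    refine ⟨{truncAt (2 * γ') h}, ?_, by simp⟩
    rw [Finset.coe_singleton]
    exact isCover_truncAt_convexHull_singleton x' fun f hf y ↦
      (hd.fatDimLE.abs_sub_le (by simp) f hf h hh y).trans (by linarith)
  have hd0 : (1 : ℝ) ≤ d := mod_cast hd1
  have hhull : FatDimLE (convexHull ℝ H) ((γ' - γ) / 2 / 14) (20070400 * d / (γ' - γ) ^ 2) := by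
    convert fatDimLE_convexHull (α := (γ' - γ) / 28) (by convert hd.fatDimLE using 1; ring)
      (by positivity) hd0 hH using 1 <;> field_simp <;> ring
  obtain ⟨N, hN, hcard⟩ := exists_isCover_log_card_le (c := 2 * γ') x' (by positivity)
    (by linarith) (Set.forall_mem_image.2 fun f _ ↦ abs_truncAt_le (by linarith) f) (by positivity)
    hm (hhull.truncAt_image (by linarith) (by positivity))
  refine ⟨N, hN, hcard.trans_eq ?_⟩
  congr 1
  · ring
  · congr 2
    field_simp
    ring

/-- covering-number bound for the truncated convex hull.
There are universal constants `C ≥ 1`, `Chat ≥ 1`, `chat > 0` such that for margins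
`0 ≤ γ < γ' ≤ 1`, any `H ⊆ [−1,1]^X` and any tuple `x' ∈ X^m` with
`m ≥ Chat·fat_{chat(γ'−γ)}(H)/(γ'−γ)²`, the minimal `(γ'−γ)/2`-cover (in sup norm on `x'`)
of `Conv(H)_{⌈2γ'⌉}` has log-size at most
`C·Chat·d/(γ'−γ)²·ln^{3/2}((γ'−γ)²m/(Chat·d)·8γ'/(γ'−γ))`, i.e. there exists such a cover
of that size. -/
theorem statement6 :
    ∃ C Chat chat : ℝ, 1 ≤ C ∧ 1 ≤ Chat ∧ 0 < chat ∧
    ∀ (X : Type) (γ γ' : ℝ) (H : Set (X → ℝ)) (m : ℕ) (x' : Fin m → X),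
      0 ≤ γ → γ < γ' → γ' ≤ 1 → (∀ h ∈ H, ∀ x, |h x| ≤ 1) →
      ∀ d : ℕ, IsFatDim H (chat * (γ' - γ)) d →
      Chat * d / (γ' - γ) ^ 2 ≤ m →
      ∃ N : Finset (X → ℝ),
        IsCover x' (truncAt (2 * γ') '' (convexHull ℝ H)) ((γ' - γ) / 2) ↑N ∧
        Real.log N.card ≤
          C * Chat * d / (γ' - γ) ^ 2 *
            Real.log ((γ' - γ) ^ 2 * m / (Chat * d) * (8 * γ' / (γ' - γ))) ^ ((3 : ℝ) / 2) :=
  ⟨12, 20070400, 1 / 6272, by norm_num, by norm_num, by norm_num,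
    fun _ _ _ _ _ x' hγ hγγ' _ hH _ hd hm ↦ statement6_general x' hγ hγγ' hH hd hm⟩
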